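/- Let x : ℕ → Fin 2 be nonrecurrent and pattern Sturmian, and suppose the orbit closure of x contains an infinite minimal subshift. Then there exist an irrational α, natural numbers k₁ ≠ k₂, and an interval I of 𝕋 = ℝ/ℤ which is either the open arc from k₁α to k₂α or the closed arc from k₁α to k₂α (mod 1), such that x(n) = 1_I(nα mod 1) for all n ∈ ℕ. -/

import Mathlib

open Set

abbrev Seq2 := ℕ → Fin 2

def patLang (x : Seq2) (τ : Finset ℕ) : Set ((s : τ) → Fin 2) :=
  {w | ∃ m : ℕ, ∀ s : τ, w s = x (m + (s : ℕ))}

noncomputable def pstar (x : Seq2) (n : ℕ) : ℕ :=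
  sSup {c : ℕ | ∃ τ : Finset ℕ, τ.card = n ∧ (patLang x τ).ncard = c}

def PatternSturmian (x : Seq2) : Prop := ∀ n : ℕ, 1 ≤ n → pstar x n = 2 * n

def Recurrent (x : Seq2) : Prop :=
  ∀ L : ℕ, ∃ M : ℕ, 1 ≤ M ∧ ∀ i < L, x i = x (M + i)

def shiftMap (x : Seq2) : Seq2 := fun n => x (n + 1)

def orbitClosure (x : Seq2) : Set Seq2 :=
  closure {y : Seq2 | ∃ m : ℕ, y = fun n => x (m + n)}

def IsSubshift (X : Set Seq2) : Prop :=
  X.Nonempty ∧ IsClosed X ∧ ∀ x ∈ X, shiftMap x ∈ X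

def MinimalSubshift (X : Set Seq2) : Prop :=
  IsSubshift X ∧
    ∀ Z ⊆ X, IsClosed Z → (∀ x ∈ Z, shiftMap x ∈ Z) → Z.Nonempty → Z = X

abbrev T1 := AddCircle (1 : ℝ)


/-! ### Basic notions on two-sided Boolean sequences -/

/-- pattern bound for a two-sided sequence -/
def PBd (z : ℤ → Bool) : Prop :=
  ∀ (ι : Type) [Fintype ι] (f : ι → ℤ) (τ : Finset ℤ), τ.Nonempty →
    (∀ i j, i ≠ j → ∃ s ∈ τ, z (f i + s) ≠ z (f j + s)) → Fintype.card ι ≤ 2 * τ.card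

/-- uniform recurrence along multiples of every `t` -/
def URd (z : ℤ → Bool) : Prop :=
  ∀ t : ℤ, 0 < t → ∀ R : ℤ, ∃ G : ℤ, 0 < G ∧ ∀ a : ℤ, ∃ g : ℤ, a ≤ g ∧ g ≤ a + G ∧ t ∣ g ∧
    ∀ i : ℤ, |i| ≤ R → z (i + g) = z i

/-- no class is constant -/
def NoConst (z : ℤ → Bool) : Prop :=
  ∀ t : ℤ, 0 < t → ∀ i : ℤ, ∃ j : ℤ, z (i + j * t) ≠ z i

/-- pattern bound for the one-sided sequence (only nonnegative positions are used) -/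
def XBd (X : ℤ → Bool) : Prop :=
  ∀ (ι : Type) [Fintype ι] (u : ι → ℤ → Bool) (τ : Finset ℤ), τ.Nonempty →
    (∀ i, ∃ m : ℤ, ∀ s ∈ τ, 0 ≤ m + s ∧ X (m + s) = u i s) →
    (∀ i j, i ≠ j → ∃ s ∈ τ, u i s ≠ u j s) → Fintype.card ι ≤ 2 * τ.card

/-- every block of `z` occurs late in `X` -/
def LateOcc (X z : ℤ → Bool) : Prop :=
  ∀ R N : ℤ, ∃ m : ℤ, N + R ≤ m ∧ ∀ i : ℤ, |i| ≤ R → X (m + i) = z i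

theorem xbd_of_sturmian (x : Seq2) (hps : PatternSturmian x) :
    XBd (fun m : ℤ => decide (x m.toNat = 1)) := by
  classical
  intro ι _ u τ hτ hocc hdist
  set c := τ.min' hτ with hc
  have hcle : ∀ s ∈ τ, c ≤ s := fun s hs => Finset.min'_le _ _ hs
  set τ' : Finset ℕ := τ.image (fun s => (s - c).toNat) with hτ'
  have hcard : τ'.card = τ.card := by
    apply Finset.card_image_of_injOn
    intro a ha b hb hab
    have h1 := hcle a ha
    have h2 := hcle b hb
    simp only at hab
    omega
  have hmem : ∀ s : τ', (s : ℕ) + c ∈ τ := by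
    intro s
    obtain ⟨a, ha, hs⟩ := Finset.mem_image.1 s.2
    have h1 := hcle a ha
    have : ((s : ℕ) : ℤ) + c = a := by omega
    rw [this]; exact ha
  choose M hM using hocc
  let W : ι → ((s : τ') → Fin 2) := fun i s => if u i ((s : ℕ) + c) then 1 else 0
  have hWmem : ∀ i, W i ∈ patLang x τ' := by
    intro i
    have h0 := (hM i c (Finset.min'_mem _ _)).1
    refine ⟨(M i + c).toNat, fun s => ?_⟩
    have h1 := (hM i _ (hmem s))
    have e : (M i + ((s : ℕ) + c)).toNat = (M i + c).toNat + (s : ℕ) := by omega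
    have h2 := h1.2
    simp only [e] at h2
    simp only [W, ← h2]
    generalize x ((M i + c).toNat + ↑s) = v
    revert v; decide
  have hWinj : Function.Injective W := by
    intro i j hij
    by_contra hne
    obtain ⟨s, hs, hne⟩ := hdist i j hne
    have h1 := hcle s hs
    have hs' : (s - c).toNat ∈ τ' := Finset.mem_image_of_mem _ hs
    have h2 := congrFun hij ⟨_, hs'⟩
    have e : (((s - c).toNat : ℕ) : ℤ) + c = s := by omega
    simp only [W, e] at h2
    revert h2 hne
    cases u i s <;> cases u j s <;> simp
  have hle : Fintype.card ι ≤ (patLang x τ').ncard := by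
    rw [← Nat.card_eq_fintype_card, ← Set.ncard_univ, ← Set.ncard_image_of_injective _ hWinj]
    apply Set.ncard_le_ncard _ (Set.toFinite _)
    rintro _ ⟨i, _, rfl⟩
    exact hWmem i
  have hp := hps τ.card hτ.card_pos
  rw [← hp]
  refine hle.trans ?_
  unfold pstar
  apply le_csSup
  · refine ⟨2 ^ τ.card, ?_⟩
    rintro _ ⟨σ, hσ, rfl⟩
    have h1 : (patLang x σ).ncard ≤ (Set.univ : Set ((s : σ) → Fin 2)).ncard :=
      Set.ncard_le_ncard (Set.subset_univ _) (Set.toFinite _)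
    refine h1.trans ?_
    rw [Set.ncard_univ, Nat.card_eq_fintype_card]
    simp [hσ]
  · exact ⟨τ', hcard, rfl⟩

theorem pbd_of_xbd {X z : ℤ → Bool} (hX : XBd X) (hL : LateOcc X z) : PBd z := by
  intro ι _ f τ hτ hd
  obtain ⟨R, hR⟩ : ∃ R : ℤ, ∀ i, ∀ s ∈ τ, |f i + s| ≤ R := by
    refine ⟨∑ i, ∑ s ∈ τ, |f i + s|, fun i s hs => ?_⟩
    refine le_trans ?_ (Finset.single_le_sum (f := fun i => ∑ s ∈ τ, |f i + s|)
      (fun j _ => Finset.sum_nonneg fun _ _ => abs_nonneg _) (Finset.mem_univ i))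
    exact Finset.single_le_sum (f := fun s => |f i + s|) (fun _ _ => abs_nonneg _) hs
  obtain ⟨m, hm, hz⟩ := hL R 0
  refine hX ι (fun i s => z (f i + s)) τ hτ (fun i => ⟨m + f i, fun s hs => ?_⟩) hd
  have h1 := hR i s hs
  have h2 := abs_le.1 h1
  refine ⟨by omega, ?_⟩
  rw [add_assoc]; exact hz _ h1

/-! ### Existence of a uniformly recurrent two-sided point -/

theorem exists_unif_rec {X : Type*} [TopologicalSpace X] [CompactSpace X]
    (S : ℤ → X → X) (hS : ∀ a, Continuous (S a)) (hadd : ∀ a b w, S (a + b) w = S a (S b w))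
    (h0 : ∀ w, S 0 w = w)
    (C : Set X) (hC : IsClosed C) (hne : C.Nonempty) (hinv : ∀ a, ∀ w ∈ C, S a w ∈ C) :
    ∃ w ∈ C, ∀ U : Set X, IsOpen U → w ∈ U → ∃ G : ℤ, 0 < G ∧ ∀ a : ℤ, ∃ g, a ≤ g ∧ g ≤ a + G ∧
      S g w ∈ U := by
  obtain ⟨K, hK⟩ := zorn_superset
    {K : Set X | K ⊆ C ∧ IsClosed K ∧ K.Nonempty ∧ ∀ a, ∀ w ∈ K, S a w ∈ K} (by
      intro c hc hchain
      by_cases hcne : c.Nonempty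
      · refine ⟨⋂₀ c, ⟨?_, ?_, ?_, ?_⟩, fun s hs => Set.sInter_subset_of_mem hs⟩
        · obtain ⟨s, hs⟩ := hcne
          exact (Set.sInter_subset_of_mem hs).trans (hc hs).1
        · exact isClosed_sInter fun s hs => (hc hs).2.1
        · have : Nonempty c := hcne.to_subtype
          apply IsCompact.nonempty_sInter_of_directed_nonempty_isCompact_isClosed
          · intro a ha b hb
            rcases hchain.total ha hb with h | h
            · exact ⟨a, ha, subset_rfl, h⟩
            · exact ⟨b, hb, h, subset_rfl⟩
          · exact fun s hs => (hc hs).2.2.1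
          · exact fun s hs => (hc hs).2.1.isCompact
          · exact fun s hs => (hc hs).2.1
        · intro a w hw s hs
          exact (hc hs).2.2.2 a w (hw s hs)
      · rw [Set.not_nonempty_iff_eq_empty] at hcne
        subst hcne
        exact ⟨C, ⟨subset_rfl, hC, hne, hinv⟩, by simp⟩)
  obtain ⟨⟨hKC, hKcl, ⟨w, hw⟩, hKinv⟩, hKmin⟩ := hK
  refine ⟨w, hKC hw, fun U hU hwU => ?_⟩
  have hcov : K ⊆ ⋃ g : ℤ, S g ⁻¹' U := by
    by_contra hnot
    have hmem : K \ (⋃ g : ℤ, S g ⁻¹' U) ∈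
        {K : Set X | K ⊆ C ∧ IsClosed K ∧ K.Nonempty ∧ ∀ a, ∀ w ∈ K, S a w ∈ K} := by
      refine ⟨Set.sdiff_subset.trans hKC, ?_, ?_, ?_⟩
      · exact hKcl.sdiff (isOpen_iUnion fun g => hU.preimage (hS g))
      · obtain ⟨v, hv, hv'⟩ := Set.not_subset.1 hnot
        exact ⟨v, hv, hv'⟩
      · rintro a v ⟨hv, hv'⟩
        refine ⟨hKinv a v hv, fun h => hv' ?_⟩
        obtain ⟨g, hg⟩ := Set.mem_iUnion.1 h
        refine Set.mem_iUnion.2 ⟨g + a, ?_⟩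
        simp only [Set.mem_preimage] at hg ⊢
        rw [hadd]; exact hg
    have := hKmin hmem Set.sdiff_subset hw
    apply this.2
    refine Set.mem_iUnion.2 ⟨0, ?_⟩
    simp only [Set.mem_preimage, h0]; exact hwU
  obtain ⟨F, hF⟩ := hKcl.isCompact.elim_finite_subcover _
    (fun g => hU.preimage (hS g)) hcov
  set B := ∑ f ∈ F, |f| with hB
  have hBf : ∀ f ∈ F, |f| ≤ B := fun f hf =>
    Finset.single_le_sum (f := fun f => |f|) (fun _ _ => abs_nonneg _) hf
  have hB0 : 0 ≤ B := Finset.sum_nonneg fun _ _ => abs_nonneg _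
  refine ⟨2 * B + 1, by omega, fun a => ?_⟩
  have h1 := hF (hKinv (a + B) w hw)
  simp only [Set.mem_iUnion, Set.mem_preimage, exists_prop] at h1
  obtain ⟨f, hf, hfU⟩ := h1
  rw [← hadd] at hfU
  have h2 := abs_le.1 (hBf f hf)
  exact ⟨f + (a + B), by omega, by omega, hfU⟩

theorem exists_twosided (Y : Set Seq2) (hY : MinimalSubshift Y) :
    ∃ z : ℤ → Fin 2, ∀ k : ℤ, (fun n : ℕ => z (k + n)) ∈ Y := by
  obtain ⟨⟨⟨y, hy⟩, hcl, hinv⟩, -⟩ := hY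
  have hsh : ∀ m : ℕ, (fun n => y (n + m)) ∈ Y := by
    intro m
    induction m with
    | zero => exact hy
    | succ m ih =>
      have h := hinv _ ih
      have e : shiftMap (fun n => y (n + m)) = fun n => y (n + (m + 1)) := by
        funext n; simp only [shiftMap]; congr 1; omega
      rwa [e] at h
  let f : ℕ → ℤ → Fin 2 := fun m n => y ((m + n).toNat)
  obtain ⟨z, -, hz⟩ := (isCompact_univ (X := ℤ → Fin 2)).ultrafilter_le_nhds
    ((Filter.hyperfilter ℕ : Ultrafilter ℕ).map f) (by simp)
  have hz' : Filter.Tendsto f (Filter.hyperfilter ℕ : Filter ℕ) (nhds z) := hz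
  refine ⟨z, fun k => ?_⟩
  have hcont : Continuous (fun u : ℤ → Fin 2 => (fun n : ℕ => u (k + n))) := by fun_prop
  have ht := (hcont.tendsto z).comp hz'
  refine hcl.mem_of_tendsto ht ?_
  have : ∀ᶠ m : ℕ in Filter.atTop, ((fun u : ℤ → Fin 2 => (fun n : ℕ => u (k + n))) ∘ f) m ∈ Y := by
    filter_upwards [Filter.eventually_ge_atTop k.natAbs] with m hm
    have h := hsh (m + k).toNat
    convert h using 1
    funext n
    simp only [Function.comp, f]
    congr 1; omega
  rw [← Nat.cofinite_eq_atTop] at this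
  exact Filter.hyperfilter_le_cofinite this

theorem late_of_mem (x : Seq2) (Y : Set Seq2) (hYx : Y ⊆ orbitClosure x) (z : ℤ → Fin 2)
    (hz : ∀ k : ℤ, (fun n : ℕ => z (k + n)) ∈ Y) :
    LateOcc (fun m : ℤ => decide (x m.toNat = 1)) (fun m => decide (z m = 1)) := by
  intro R N
  have h1 := hYx (hz (-(|R| + |N|)))
  let U : Set Seq2 := {u | ∀ n ∈ Finset.range (2 * |R| + |N| + 1).toNat,
    u n = z (-(|R| + |N|) + n)}
  have hU : IsOpen U := by
    have : U = ⋂ n ∈ Finset.range (2 * |R| + |N| + 1).toNat,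
        (fun u : Seq2 => u n) ⁻¹' {z (-(|R| + |N|) + n)} := by
      ext u; simp [U]
    rw [this]
    exact isOpen_biInter_finset fun n _ => (isOpen_discrete _).preimage (continuous_apply n)
  obtain ⟨u, huU, m0, rfl⟩ := mem_closure_iff.1 h1 U hU (fun n _ => rfl)
  have a1 := le_abs_self R
  have a2 := le_abs_self N
  have a3 := abs_nonneg R
  have a4 := abs_nonneg N
  refine ⟨m0 + |R| + |N|, by omega, fun i hi => ?_⟩
  have hi' := abs_le.1 hi
  have h2 := huU (i + |R| + |N|).toNat (Finset.mem_range.2 (by omega))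
  have e1 : (↑m0 + |R| + |N| + i).toNat = m0 + (i + |R| + |N|).toNat := by omega
  have e2 : -(|R| + |N|) + (((i + |R| + |N|).toNat : ℕ) : ℤ) = i := by omega
  rw [e2] at h2
  simp only [e1, h2]

theorem aper_of_mem (Y : Set Seq2) (hY : MinimalSubshift Y) (hinf : Y.Infinite) (z : ℤ → Fin 2)
    (hz : ∀ k : ℤ, (fun n : ℕ => z (k + n)) ∈ Y) (g : ℤ) (hg : 0 < g)
    (hper : ∀ q, z (q + g) = z q) : False := by
  let Z : Set Seq2 := (fun k : ℤ => (fun n : ℕ => z (k + n))) '' (Set.Ico 0 g)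
  have hZfin : Z.Finite := (Set.finite_Ico 0 g).image _
  have hp : ∀ (j : ℤ) q, z (q + j * g) = z q := by
    intro j
    induction j using Int.induction_on with
    | zero => simp
    | succ i ih => intro q; rw [add_mul, one_mul, ← add_assoc, hper, ih]
    | pred i ih => intro q; rw [← hper, ← ih q]; congr 1; ring
  have hZall : ∀ k : ℤ, (fun n : ℕ => z (k + n)) ∈ Z := by
    intro k
    refine ⟨k % g, ⟨Int.emod_nonneg _ hg.ne', Int.emod_lt_of_pos _ hg⟩, ?_⟩
    funext n
    have := hp (k / g) (k % g + n)
    simp only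
    rw [← this]; congr 1
    have := Int.emod_add_mul_ediv k g
    linarith
  have := hY.2 Z (by rintro _ ⟨k, _, rfl⟩; exact hz k) hZfin.isClosed (by
    rintro _ ⟨k, _, rfl⟩
    have h := hZall (k + 1)
    convert h using 1
    funext n
    simp only [shiftMap]; congr 1; push_cast; ring) ⟨_, hZall 0⟩
  exact hinf (this ▸ hZfin)

/-- alphabet with an odometer coordinate -/
abbrev OdoAlph := Fin 2 × ((t : ℕ) → Fin (t + 1))

theorem exists_unif_rec_twosided (Y : Set Seq2) (hY : MinimalSubshift Y) :
    ∃ z : ℤ → Fin 2, (∀ k : ℤ, (fun n : ℕ => z (k + n)) ∈ Y) ∧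
      URd (fun m => decide (z m = 1)) := by
  obtain ⟨z0, hz0⟩ := exists_twosided Y hY
  let S : ℤ → (ℤ → OdoAlph) → (ℤ → OdoAlph) := fun a w n => w (n + a)
  let C : Set (ℤ → OdoAlph) := {w | (∀ k : ℤ, (fun n : ℕ => (w (k + n)).1) ∈ Y) ∧
    ∀ (n : ℤ) (t : ℕ), ((((w (n + 1)).2 t : Fin (t + 1)) : ℕ) : ℤ) ≡ (((w n).2 t : ℕ) : ℤ) + 1
      [ZMOD (t + 1 : ℤ)]}
  have hCcl : IsClosed C := by
    have : C = (⋂ k : ℤ, (fun w : ℤ → OdoAlph => (fun n : ℕ => (w (k + n)).1)) ⁻¹' Y) ∩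
      ⋂ (n : ℤ), ⋂ (t : ℕ), (fun w : ℤ → OdoAlph => ((w (n + 1)).2 t, (w n).2 t)) ⁻¹'
        {p : Fin (t + 1) × Fin (t + 1) | ((p.1 : ℕ) : ℤ) ≡ ((p.2 : ℕ) : ℤ) + 1
      [ZMOD (t + 1 : ℤ)]} := by
      ext w; simp [C]
    rw [this]
    refine IsClosed.inter (isClosed_iInter fun k => hY.1.2.1.preimage (by fun_prop))
      (isClosed_iInter fun n => isClosed_iInter fun t => (isClosed_discrete _).preimage ?_)
    fun_prop
  have hCne : C.Nonempty := by
    refine ⟨fun n => (z0 n, fun t => ⟨(n % ((t : ℤ) + 1)).toNat, ?_⟩), hz0, ?_⟩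
    · have := Int.emod_lt_of_pos n (show (0 : ℤ) < (t : ℤ) + 1 by omega)
      omega
    · intro n t
      have h1 := Int.emod_nonneg n (show ((t : ℤ) + 1) ≠ 0 by omega)
      have h2 := Int.emod_nonneg (n + 1) (show ((t : ℤ) + 1) ≠ 0 by omega)
      simp only
      rw [Int.toNat_of_nonneg h1, Int.toNat_of_nonneg h2]
      exact (Int.mod_modEq _ _).trans ((Int.mod_modEq n _).symm.add_right 1)
  obtain ⟨w, hwC, hw⟩ := exists_unif_rec S (fun a => by fun_prop)
    (fun a b w => by funext n; simp only [S]; congr 1; ring) (fun w => by funext n; simp [S])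
    C hCcl hCne (fun a w hw => by
      refine ⟨fun k => ?_, fun n t => ?_⟩
      · have := hw.1 (k + a)
        simp only [S]
        convert this using 4
        ring
      · have := hw.2 (n + a) t
        simp only [S]
        rwa [show n + 1 + a = n + a + 1 by ring])
  refine ⟨fun n => (w n).1, hwC.1, ?_⟩
  intro t ht R
  obtain ⟨t', rfl⟩ : ∃ t' : ℕ, t = t' + 1 := ⟨(t - 1).toNat, by omega⟩
  let U : Set (ℤ → OdoAlph) := {u | (u 0).2 t' = (w 0).2 t' ∧ ∀ i ∈ Finset.Icc (-R) R, (u i).1 = (w i).1}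
  have hU : IsOpen U := by
    have : U = ((fun u : ℤ → OdoAlph => (u 0).2 t') ⁻¹' {(w 0).2 t'}) ∩ ⋂ i ∈ Finset.Icc (-R) R,
        (fun u : ℤ → OdoAlph => (u i).1) ⁻¹' {(w i).1} := by
      ext u; simp [U]
    rw [this]
    refine IsOpen.inter ((isOpen_discrete _).preimage (by fun_prop)) ?_
    exact isOpen_biInter_finset fun n _ => (isOpen_discrete _).preimage (by fun_prop)
  obtain ⟨G, hG, hret⟩ := hw U hU ⟨rfl, fun _ _ => rfl⟩
  refine ⟨G, hG, fun a => ?_⟩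
  obtain ⟨g, h1, h2, h3, h4⟩ := hret a
  refine ⟨g, h1, h2, ?_, fun i hi => ?_⟩
  · have key : ∀ n : ℤ, (((w n).2 t' : ℕ) : ℤ) ≡ (((w 0).2 t' : ℕ) : ℤ) + n
      [ZMOD (t' + 1 : ℤ)] := by
      intro n
      induction n using Int.induction_on with
      | zero => simp
      | succ i ih =>
        have := (hwC.2 i t').trans (ih.add_right 1)
        rwa [add_assoc] at this
      | pred i ih =>
        have h := hwC.2 (-(i : ℤ) - 1) t'
        rw [sub_add_cancel] at h
        have h' := (h.symm.trans ih).sub_right 1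
        convert h' using 1 <;> ring
    have h5 := key g
    simp only [S, zero_add] at h3
    rw [h3] at h5
    have := h5.dvd
    simpa using this
  · have := h4 i (Finset.mem_Icc.2 (abs_le.1 hi))
    simp only [S] at this
    simp only [this]

/-! ### Bounded return, van der Waerden, rigidity -/

theorem occ_uniform {z : ℤ → Bool} (hUR : URd z) (Q : ℤ) (hQ : 0 < Q) :
    ∃ K : ℤ, 0 < K ∧ ∀ p q : ℤ, Q ∣ p - q → ∃ k, 0 ≤ k ∧ k < K ∧ z (p + k * Q) = z q := by
  classical
  let f : ℤ → Bool → ℤ := fun i b => if h : ∃ q, Q ∣ q - i ∧ z q = b then h.choose else 0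
  have hf : ∀ i b, (∃ q, Q ∣ q - i ∧ z q = b) → Q ∣ f i b - i ∧ z (f i b) = b := by
    intro i b h
    simp only [f, dif_pos h]
    exact h.choose_spec
  set R := ∑ i ∈ Finset.Ico 0 Q, ∑ b : Bool, |f i b| with hR
  have hR0 : 0 ≤ R := Finset.sum_nonneg fun _ _ => Finset.sum_nonneg fun _ _ => abs_nonneg _
  have hRf : ∀ i ∈ Finset.Ico 0 Q, ∀ b, |f i b| ≤ R := by
    intro i hi b
    refine le_trans ?_ (Finset.single_le_sum (f := fun i => ∑ b : Bool, |f i b|)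
      (fun j _ => Finset.sum_nonneg fun _ _ => abs_nonneg _) hi)
    exact Finset.single_le_sum (f := fun b => |f i b|) (fun _ _ => abs_nonneg _)
      (Finset.mem_univ b)
  obtain ⟨G, hG, hret⟩ := hUR Q hQ R
  refine ⟨2 * R + G + 1, by omega, fun p q hpq => ?_⟩
  have hmem : p % Q ∈ Finset.Ico 0 Q :=
    Finset.mem_Ico.2 ⟨Int.emod_nonneg _ hQ.ne', Int.emod_lt_of_pos _ hQ⟩
  have hpp : Q ∣ p - p % Q := Int.dvd_self_sub_emod
  obtain ⟨h1, h2⟩ := hf (p % Q) (z q) ⟨q, by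
    have := dvd_sub hpp hpq; rwa [show p - p % Q - (p - q) = q - p % Q by ring] at this, rfl⟩
  have h3 := hRf _ hmem (z q)
  set r := f (p % Q) (z q)
  obtain ⟨g, hg1, hg2, hg3, hg4⟩ := hret (p + R)
  have h4 := abs_le.1 h3
  obtain ⟨k, hk⟩ : Q ∣ r + g - p := by
    have := dvd_add (dvd_sub h1 hpp) hg3
    rwa [show r - p % Q - (p - p % Q) + g = r + g - p by ring] at this
  have hk0 : 0 ≤ k := by
    by_contra hneg
    have : Q * k < 0 := mul_neg_of_pos_of_neg hQ (by omega)
    omega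
  refine ⟨k, hk0, ?_, ?_⟩
  · have : k ≤ Q * k := by nlinarith
    omega
  · rw [show p + k * Q = r + g by linarith [hk, mul_comm k Q], hg4 r h3, h2]

theorem bounded_ret {z : ℤ → Bool} (hUR : URd z) (hNC : NoConst z) (Q : ℤ) (hQ : 0 < Q) :
    ∃ K : ℤ, 0 < K ∧ ∀ (p : ℤ) (b : Bool), ∃ k, 0 ≤ k ∧ k < K ∧ z (p + k * Q) = b := by
  obtain ⟨K, hK, h⟩ := occ_uniform hUR Q hQ
  refine ⟨K, hK, fun p b => ?_⟩
  by_cases hb : z p = b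
  · exact ⟨0, le_rfl, hK, by simpa using hb⟩
  · obtain ⟨j, hj⟩ := hNC Q hQ p
    obtain ⟨k, h1, h2, h3⟩ := h p (p + j * Q) ⟨-j, by ring⟩
    refine ⟨k, h1, h2, ?_⟩
    rw [h3]
    revert hj hb
    cases z (p + j * Q) <;> cases z p <;> cases b <;> simp

theorem vdw_runs {z : ℤ → Bool} (hUR : URd z) (hNC : NoConst z) (N : ℕ) :
    ∃ T : ℤ, 0 < T ∧ ∀ b : Bool, ∃ p : ℤ, ∀ j : ℕ, j ≤ N → z (p + j * T) = b := by
  obtain ⟨K, hK, hbr⟩ := bounded_ret hUR hNC 1 one_pos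
  obtain ⟨a, ha, p, c, hc⟩ := Combinatorics.exists_mono_homothetic_copy (M := ℤ)
    ((Finset.range (N + 1)).image (fun j : ℕ => (j : ℤ)))
    (fun m : ℤ => (fun l : Fin K.toNat => z (m + l)))
  refine ⟨a, by exact_mod_cast ha, fun b => ?_⟩
  obtain ⟨k, hk0, hkK, hk⟩ := hbr p b
  refine ⟨p + k, fun j hj => ?_⟩
  have h0 := hc 0 (by simp)
  have h1 := hc j (Finset.mem_image_of_mem _ (Finset.mem_range.2 (by omega)))
  have h2 := congrFun (h1.trans h0.symm) ⟨k.toNat, by omega⟩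
  simp only [Int.toNat_of_nonneg hk0, nsmul_eq_mul, mul_zero, zero_add, mul_one] at h2 hk
  rw [← hk, ← h2]; congr 1; ring

/-- first change after a position -/
theorem first_change {z : ℤ → Bool} {T : ℤ} (p : ℤ) (b : Bool) (hp : z p = b)
    (h : ∃ k : ℕ, z (p + k * T) = !b) :
    ∃ k : ℕ, (∀ j : ℕ, j ≤ k → z (p + j * T) = b) ∧ z (p + (k + 1 : ℕ) * T) = !b := by
  classical
  have hf := Nat.find_spec h
  have hm := fun j (hj : j < Nat.find h) => Nat.find_min h hj
  set k := Nat.find h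
  have hk : k ≠ 0 := by
    intro h0
    rw [h0] at hf
    simp [hp] at hf
  obtain ⟨k', hk'⟩ := Nat.exists_eq_succ_of_ne_zero hk
  refine ⟨k', fun j hj => ?_, by rw [← Nat.succ_eq_add_one, ← hk']; exact hf⟩
  have := hm j (by omega)
  revert this
  cases z (p + j * T) <;> cases b <;> simp

theorem rigid {z : ℤ → Bool} (hPB : PBd z) {T : ℤ} (hT : 0 < T)
    (hbr : ∃ K : ℤ, 0 < K ∧ ∀ (p : ℤ) (b : Bool), ∃ k, 0 ≤ k ∧ k < K ∧ z (p + k * T) = b)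
    (n : ℕ) (hn : 1 ≤ n) (hrun : ∀ b : Bool, ∃ p : ℤ, ∀ j : ℕ, j ≤ n → z (p + j * T) = b)
    (m : ℤ) (hm : z m ≠ z (m + T)) (j : ℕ) (h1 : 1 ≤ j) (hjn : j ≤ n) :
    z (m + j * T) = z (m + T) := by
  classical
  obtain ⟨K, hK, hbr⟩ := hbr
  have hfw : ∀ p b, ∃ k : ℕ, z (p + k * T) = b := fun p b => by
    obtain ⟨k, hk, -, h⟩ := hbr p b
    exact ⟨k.toNat, by rwa [Int.toNat_of_nonneg hk]⟩
  have hbw : ∀ p b, ∃ k : ℕ, z (p + k * (-T)) = b := fun p b => by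
    obtain ⟨k, hk, hk', h⟩ := hbr (p - K * T) b
    refine ⟨(K - k).toNat, ?_⟩
    rw [Int.toNat_of_nonneg (by omega), ← h]; congr 1; ring
  -- run ends
  have hE : ∀ b : Bool, ∃ e : ℤ, (∀ j : ℕ, j ≤ n → z (e - j * T) = b) ∧ z (e + T) = !b := by
    intro b
    obtain ⟨p, hp⟩ := hrun b
    obtain ⟨k, hk1, hk2⟩ := first_change (T := T) (p + n * T) b (hp n le_rfl) (hfw _ _)
    refine ⟨p + n * T + k * T, fun j hj => ?_, by rw [← hk2]; congr 1; push_cast; ring⟩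
    by_cases hjk : j ≤ k
    · rw [← hk1 (k - j) (by omega)]; congr 1; push_cast [hjk]; ring
    · rw [← hp (n + k - j) (by omega)]; congr 1
      push_cast [show j ≤ n + k by omega]; ring
  choose e he1 he2 using hE
  -- all words starting with b, !b agree
  have key : ∀ p p' : ℤ, z p = z p' → z (p + T) = !z p → z (p' + T) = !z p' →
      ∀ j : ℕ, j ≤ n → z (p + j * T) = z (p' + j * T) := by
    intro p p' hpp hp hp' j hj
    by_contra hne
    let f : Option (Bool × Fin (n + 1)) → ℤ := fun o => match o with
      | none => p'
      | some (b, i) => if b = z p ∧ (i : ℕ) = 0 then p else e b - (i : ℕ) * T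
    have hf0 : ∀ b i, z (f (some (b, i))) = b := by
      intro b i
      simp only [f]
      split_ifs with h
      · exact h.1.symm
      · exact he1 b i (by omega)
    have hfr : ∀ b (i : Fin (n + 1)) (l : ℕ), l ≤ i → z (f (some (b, i)) + l * T) = b := by
      intro b i l hl
      simp only [f]
      split_ifs with h
      · have : l = 0 := by omega
        subst this; simp [h.1]
      · convert he1 b (i - l) (by omega) using 2; push_cast [hl]; ring
    have hfs : ∀ b (i : Fin (n + 1)), z (f (some (b, i)) + ((i : ℕ) + 1 : ℕ) * T) = !b := by
      intro b i
      simp only [f]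
      split_ifs with h
      · rw [h.2, h.1, ← hp]; congr 1; push_cast; ring
      · rw [← he2 b]; congr 1; push_cast; ring
    have hcard := hPB (Option (Bool × Fin (n + 1))) f
      ((Finset.range (n + 1)).image (fun j : ℕ => (j : ℤ) * T)) (by simp) (by
      have hmem : ∀ j : ℕ, j ≤ n → (j : ℤ) * T ∈
          (Finset.range (n + 1)).image (fun j : ℕ => (j : ℤ) * T) := fun j hj =>
        Finset.mem_image_of_mem (fun j : ℕ => (j : ℤ) * T) (Finset.mem_range.2 (by omega))
      have hnone : ∀ b i, ∃ s ∈ (Finset.range (n + 1)).image (fun j : ℕ => (j : ℤ) * T),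
          z (f (some (b, i)) + s) ≠ z (f none + s) := by
        intro b i
        by_cases hb : b = z p
        · by_cases hi : (i : ℕ) = 0
          · refine ⟨_, hmem j hj, ?_⟩
            simp only [f, hb, hi, and_self, if_true]
            exact hne
          · refine ⟨_, hmem 1 hn, ?_⟩
            rw [hfr b i 1 (by omega)]
            simp only [f, Nat.cast_one, one_mul, hp', ← hpp, hb]
            simp
        · refine ⟨_, hmem 0 (by omega), ?_⟩
          rw [hfr b i 0 (by omega)]
          simp only [f, Nat.cast_zero, zero_mul, add_zero, ← hpp]
          exact hb
      have hsame : ∀ b (i i' : Fin (n + 1)), (i : ℕ) < i' →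
          ∃ s ∈ (Finset.range (n + 1)).image (fun j : ℕ => (j : ℤ) * T),
          z (f (some (b, i)) + s) ≠ z (f (some (b, i')) + s) := by
        intro b i i' hii
        refine ⟨_, hmem (i + 1) (by omega), ?_⟩
        rw [hfs, hfr b i' _ (by omega)]
        simp
      intro o o' hoo
      match o, o' with
      | none, none => exact absurd rfl hoo
      | none, some (b, i) =>
        obtain ⟨s, hs, h⟩ := hnone b i
        exact ⟨s, hs, h.symm⟩
      | some (b, i), none => exact hnone b i
      | some (b, i), some (b', i') =>
        by_cases hb : b = b'
        · subst hb
          have hii : (i : ℕ) ≠ i' := by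
            intro h; apply hoo; rw [Fin.ext h]
          rcases Nat.lt_or_gt_of_ne hii with h | h
          · exact hsame b i i' h
          · obtain ⟨s, hs, h⟩ := hsame b i' i h
            exact ⟨s, hs, h.symm⟩
        · refine ⟨_, hmem 0 (by omega), ?_⟩
          rw [hfr b i 0 (by omega), hfr b' i' 0 (by omega)]
          exact hb)
    have hc2 : ((Finset.range (n + 1)).image (fun j : ℕ => (j : ℤ) * T)).card ≤ n + 1 := by
      simpa using Finset.card_image_le (s := Finset.range (n + 1)) (f := fun j : ℕ => (j : ℤ) * T)
    simp at hcard
    omega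
  -- start of a long run
  obtain ⟨p, hp⟩ := hrun (z (m + T))
  have hmT : z (m + T) = !z m := by
    revert hm; cases z m <;> cases z (m + T) <;> simp
  obtain ⟨k, hk1, hk2⟩ := first_change (T := -T) p (z (m + T)) (by simpa using hp 0 (by omega))
    (hbw _ _)
  have hstart : ∀ j : ℕ, 1 ≤ j → j ≤ n → z (p + (k + 1 : ℕ) * (-T) + j * T) = z (m + T) := by
    intro j hj hjn
    by_cases hjk : j ≤ k + 1
    · rw [← hk1 (k + 1 - j) (by omega)]; congr 1; push_cast [hjk]; ring
    · rw [← hp (j - (k + 1)) (by omega)]; congr 1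
      push_cast [show k + 1 ≤ j by omega]; ring
  have hz' : z (p + (k + 1 : ℕ) * (-T)) = z m := by rw [hk2, hmT]; simp
  have := key m (p + (k + 1 : ℕ) * (-T)) hz'.symm hmT (by
    have := hstart 1 le_rfl hn
    rw [Nat.cast_one, one_mul] at this
    rw [this, hz', hmT]) j hjn
  rw [this, hstart j h1 hjn]

/-! ### Exits, transfer, and the line interface -/

theorem bool_switch_iff {a b : Bool} : a ≠ b ↔ b = !a := by cases a <;> cases b <;> simp

theorem back_run {z : ℤ → Bool} {T : ℤ} {n : ℕ}
    (hRig : ∀ m, z m ≠ z (m + T) → ∀ j : ℕ, 1 ≤ j → j ≤ n → z (m + j * T) = z (m + T))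
    (m : ℤ) (hm : z m ≠ z (m + T)) (j : ℕ) (hj : j < n) : z (m - j * T) = z m := by
  induction j with
  | zero => simp
  | succ i ih =>
    have ih := ih (by omega)
    by_contra hne
    have h1 : z (m - (i + 1 : ℕ) * T) ≠ z (m - (i + 1 : ℕ) * T + T) := by
      rw [show m - (i + 1 : ℕ) * T + T = m - i * T by push_cast; ring, ih]; exact hne
    have h2 := hRig _ h1 (i + 2) (by omega) (by omega)
    rw [show m - (i + 1 : ℕ) * T + T = m - i * T by push_cast; ring, ih,
      show m - (i + 1 : ℕ) * T + (i + 2 : ℕ) * T = m + T by push_cast; ring] at h2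
    exact hm h2.symm

theorem lemmaA {z : ℤ → Bool} (hPB : PBd z) {T : ℤ} {n : ℕ} (hn : 3 ≤ n)
    (hRig : ∀ m, z m ≠ z (m + T) → ∀ j : ℕ, 1 ≤ j → j ≤ n → z (m + j * T) = z (m + T))
    (e : ℤ) (he : z e = false ∧ z (e + T) = true)
    (m m' : ℤ) (hm : z m = true ∧ z (m + T) = false) (hm' : z m' = true ∧ z (m' + T) = false)
    (d : ℤ)
    (hd : ∀ k : ℕ, k < 3 → z (m + d - k * T) ≠ z (m' + d - k * T)) : False := by
  classical
  have word : ∀ q b, z q = b → z (q + T) = !b → ∀ i j : ℕ, i < n → j < n →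
      z (q - i * T + j * T) = if j ≤ i then b else !b := by
    intro q b hq hqT i j hi hj
    have hsw : z q ≠ z (q + T) := by rw [hq, hqT]; simp
    split_ifs with h
    · rw [show q - i * T + j * T = q - (i - j : ℕ) * T by push_cast [h]; ring,
        back_run hRig q hsw _ (by omega), hq]
    · rw [show q - i * T + j * T = q + (j - i : ℕ) * T by
        push_cast [show i ≤ j by omega]; ring, hRig q hsw _ (by omega) (by omega), hqT]
  let f : (Bool × Fin n) ⊕ Fin 3 → ℤ := fun o => match o with
    | .inl (true, i) => m - (i : ℕ) * T
    | .inl (false, i) => e - (i : ℕ) * T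
    | .inr k => m' - (k : ℕ) * T
  have hf1 : ∀ b i (j : ℕ), j < n → z (f (.inl (b, i)) + j * T) = if j ≤ (i : ℕ) then b else !b := by
    intro b i j hj
    cases b
    · exact word e false he.1 he.2 i j i.2 hj
    · exact word m true hm.1 hm.2 i j i.2 hj
  have hf2 : ∀ (k : Fin 3) (j : ℕ), j < n → z (f (.inr k) + j * T) = if j ≤ (k : ℕ) then true else !true :=
    fun k j hj => word m' true hm'.1 hm'.2 k j (by omega) hj
  let τ := insert d ((Finset.range n).image (fun j : ℕ => (j : ℤ) * T))
  have hmem : ∀ j : ℕ, j < n → (j : ℤ) * T ∈ τ := fun j hj =>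
    Finset.mem_insert_of_mem (Finset.mem_image_of_mem (fun j : ℕ => (j : ℤ) * T)
      (Finset.mem_range.2 hj))
  have sep : ∀ (o o' : (Bool × Fin n) ⊕ Fin 3) (b b' : Bool) (i i' : ℕ),
      i < n → i' < n →
      (∀ j : ℕ, j < n → z (f o + j * T) = if j ≤ i then b else !b) →
      (∀ j : ℕ, j < n → z (f o' + j * T) = if j ≤ i' then b' else !b') →
      ¬ (b = b' ∧ i = i') → ∃ s ∈ τ, z (f o + s) ≠ z (f o' + s) := by
    intro o o' b b' i i' hi hi' h h' hne
    by_cases hb : b = b'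
    · subst hb
      have : i ≠ i' := fun h => hne ⟨rfl, h⟩
      rcases Nat.lt_or_gt_of_ne this with hl | hl
      · refine ⟨_, hmem (i + 1) (by omega), ?_⟩
        rw [h _ (by omega), h' _ (by omega), if_neg (by omega), if_pos (by omega)]; simp
      · refine ⟨_, hmem (i' + 1) (by omega), ?_⟩
        rw [h _ (by omega), h' _ (by omega), if_pos (by omega), if_neg (by omega)]; simp
    · refine ⟨_, hmem 0 (by omega), ?_⟩
      rw [h _ (by omega), h' _ (by omega), if_pos (by omega), if_pos (by omega)]
      exact hb
  have hcross : ∀ (b : Bool) (i : Fin n) (k : Fin 3),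
      ∃ s ∈ τ, z (f (.inl (b, i)) + s) ≠ z (f (.inr k) + s) := by
    intro b i k
    by_cases h : b = true ∧ (i : ℕ) = k
    · refine ⟨d, Finset.mem_insert_self _ _, ?_⟩
      obtain ⟨rfl, h⟩ := h
      have := hd k k.2
      simp only [f, h]
      rwa [show m - (k : ℕ) * T + d = m + d - (k : ℕ) * T by ring,
        show m' - (k : ℕ) * T + d = m' + d - (k : ℕ) * T by ring]
    · exact sep (.inl (b, i)) (.inr k) b true i k i.2 (by omega) (hf1 b i) (hf2 k) h
  have hcard := hPB _ f τ ⟨d, Finset.mem_insert_self _ _⟩ (by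
    intro o o' hoo
    match o, o' with
    | .inl (b, i), .inl (b', i') =>
      refine sep _ _ b b' i i' i.2 i'.2 (hf1 b i) (hf1 b' i') ?_
      rintro ⟨rfl, h⟩; exact hoo (by rw [Fin.ext h])
    | .inl (b, i), .inr k => exact hcross b i k
    | .inr k, .inl (b, i) =>
      obtain ⟨s, hs, h⟩ := hcross b i k
      exact ⟨s, hs, h.symm⟩
    | .inr k, .inr k' =>
      refine sep (.inr k) (.inr k') true true k k' (by omega) (by omega) (hf2 k) (hf2 k') ?_
      rintro ⟨-, h⟩; exact hoo (by rw [Fin.ext h]))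
  have hc2 : τ.card ≤ n + 1 := by
    refine (Finset.card_insert_le _ _).trans ?_
    have := Finset.card_image_le (s := Finset.range n) (f := fun j : ℕ => (j : ℤ) * T)
    simp only [Finset.card_range] at this
    omega
  simp at hcard
  omega

theorem transfer {z : ℤ → Bool} (hPB : PBd z) {T : ℤ} {n : ℕ} (hn : 3 ≤ n)
    (hRig : ∀ m, z m ≠ z (m + T) → ∀ j : ℕ, 1 ≤ j → j ≤ n → z (m + j * T) = z (m + T))
    (e : ℤ) (he : z e = false ∧ z (e + T) = true)
    (m m' : ℤ) (hm : z m = true ∧ z (m + T) = false) (hm' : z m' = true ∧ z (m' + T) = false)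
    (f : ℤ) (b : Bool) (hf : z (m + f) = b) (hfT : z (m + f + T) = !b) :
    ∃ u : ℤ, |u| ≤ 2 ∧ z (m' + f + u * T) = b ∧ z (m' + f + u * T + T) = !b := by
  have hsw : z (m + f) ≠ z (m + f + T) := by rw [hf, hfT]; simp
  have h1 : ∃ k : ℕ, k < 3 ∧ z (m' + f - k * T) = b := by
    by_contra hno
    push Not at hno
    refine lemmaA hPB hn hRig e he m m' hm hm' f fun k hk => ?_
    rw [back_run hRig _ hsw k (by omega), hf]
    exact (hno k hk).symm
  have h2 : ∃ k : ℕ, k < 3 ∧ z (m' + (f + 3 * T) - k * T) = !b := by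
    by_contra hno
    push Not at hno
    refine lemmaA hPB hn hRig e he m m' hm hm' (f + 3 * T) fun k hk => ?_
    rw [show m + (f + 3 * T) - k * T = m + f + (3 - k : ℕ) * T by
      push_cast [show k ≤ 3 by omega]; ring, hRig _ hsw _ (by omega) (by omega), hfT]
    exact (hno k hk).symm
  obtain ⟨k, hk, hkz⟩ := h1
  obtain ⟨k', hk', hkz'⟩ := h2
  obtain ⟨l, hl, hl'⟩ := first_change (z := z) (T := T) (m' + f - k * T) b hkz ⟨3 - k' + k, by
    rw [← hkz']; congr 1; push_cast [show k' ≤ 3 by omega]; ring⟩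
  have hlt : l < 3 - k' + k := by
    by_contra hge
    have := hl (3 - k' + k) (by omega)
    rw [show m' + f - k * T + (3 - k' + k : ℕ) * T = m' + (f + 3 * T) - k' * T by
      push_cast [show k' ≤ 3 by omega]; ring, hkz'] at this
    simp at this
  refine ⟨l - k, by rw [abs_le]; omega, ?_, ?_⟩
  · rw [← hl l le_rfl]; congr 1; ring
  · rw [← hl']; congr 1; push_cast; ring

theorem line_interface {z : ℤ → Bool} (hUR : URd z) (hNC : NoConst z) (hPB : PBd z) (n : ℕ)
    (hn : 3 ≤ n) : ∃ (G E : ℤ) (J : ℤ → ℤ), n ≤ G ∧ 0 ≤ E ∧ E ≤ G ∧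
      (∀ p, 0 ≤ J p ∧ J p ≤ G + 2) ∧ (∀ p, 1 ≤ J p → J p ≤ E - 3 → z p = false) ∧
      (∀ p, E + 3 ≤ J p → z p = true) ∧
      (∀ p d d', ∃ k : ℤ, |J (p + d + d') + J p - J (p + d) - J (p + d') - k * G| ≤ 2 + 2 * |k|) ∧
      (∀ j, 0 ≤ j → j < G → ∃ p, J p = j) := by
  classical
  obtain ⟨T, hT, hrun⟩ := vdw_runs hUR hNC n
  have hbr := bounded_ret hUR hNC T hT
  have hRig := rigid hPB hT hbr n (by omega) hrun
  obtain ⟨K, hK, hbr⟩ := hbr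
  have hfw : ∀ p b, ∃ k : ℕ, z (p + k * T) = b := fun p b => by
    obtain ⟨k, hk, -, h⟩ := hbr p b
    exact ⟨k.toNat, by rwa [Int.toNat_of_nonneg hk]⟩
  let Ex : ℤ → Prop := fun m => z m = true ∧ z (m + T) = false
  -- exits within bounded windows
  have hexit : ∀ p, ∃ k : ℕ, (k : ℤ) ≤ 2 * K ∧ Ex (p + k * T) := by
    intro p
    obtain ⟨k1, h1, h1', h1z⟩ := hbr p true
    obtain ⟨k2, h2, h2', h2z⟩ := hbr (p + k1 * T) false
    obtain ⟨l, hl, hl'⟩ := first_change (z := z) (T := T) (p + k1 * T) true h1z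
      ⟨k2.toNat, by rw [Int.toNat_of_nonneg h2]; simpa using h2z⟩
    have hlt : (l : ℤ) < k2 := by
      by_contra hge
      have := hl k2.toNat (by omega)
      rw [Int.toNat_of_nonneg h2, h2z] at this
      simp at this
    refine ⟨k1.toNat + l, by push_cast; omega, ?_, ?_⟩
    · rw [← hl l le_rfl]; congr 1; push_cast [Int.toNat_of_nonneg h1]; ring
    · have : z (p + (k1.toNat + l : ℕ) * T + T) = !true := by
        rw [← hl']; congr 1; push_cast [Int.toNat_of_nonneg h1]; ring
      simpa using this
  have hback : ∀ p, ∃ k : ℕ, Ex (p - k * T) := by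
    intro p
    obtain ⟨k, hk, h⟩ := hexit (p - 2 * K * T)
    refine ⟨(2 * K - k).toNat, ?_⟩
    rw [Int.toNat_of_nonneg (by omega)]
    rwa [show p - (2 * K - k) * T = p - 2 * K * T + k * T by ring]
  -- profile
  have hprof : ∀ m, Ex m → ∃ E G : ℕ, n ≤ E ∧ E + 1 ≤ G ∧
      (∀ j : ℕ, 1 ≤ j → j ≤ E → z (m + j * T) = false) ∧
      (∀ j : ℕ, E < j → j ≤ G → z (m + j * T) = true) ∧ z (m + (G + 1 : ℕ) * T) = false := by
    intro m hm
    obtain ⟨k, hk, hk'⟩ := first_change (z := z) (T := T) (m + T) false hm.2 (hfw _ _)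
    obtain ⟨l, hl, hl'⟩ := first_change (z := z) (T := T) (m + T + (k + 1 : ℕ) * T) true
      (by simpa using hk') (hfw _ _)
    refine ⟨k + 1, k + 2 + l, ?_, by omega, ?_, ?_, ?_⟩
    · by_contra hlt
      have := hRig m (by rw [hm.1, hm.2]; simp) (k + 2) (by omega) (by omega)
      rw [hm.2, show m + (k + 2 : ℕ) * T = m + T + (k + 1 : ℕ) * T by push_cast; ring, hk'] at this
      simp at this
    · intro j h1 h2
      rw [← hk (j - 1) (by omega)]; congr 1; push_cast [h1]; ring
    · intro j h1 h2
      rw [← hl (j - (k + 2)) (by omega)]; congr 1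
      push_cast [show k + 2 ≤ j by omega]; ring
    · have : z (m + (k + 2 + l + 1 : ℕ) * T) = !true := by
        rw [← hl']; congr 1; push_cast; ring
      simpa using this
  choose! Ef Gf hp1 hp2 hp3 hp4 hp5 using hprof
  have hexG : ∀ m, Ex m → Ex (m + Gf m * T) := by
    intro m hm
    refine ⟨hp4 m hm _ (by have := hp2 m hm; omega) le_rfl, ?_⟩
    rw [← hp5 m hm]; congr 1; push_cast; ring
  have hGmin : ∀ m, Ex m → ∀ j : ℕ, 1 ≤ j → Ex (m + j * T) → Gf m ≤ j := by
    intro m hm j hj hx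
    by_contra hlt
    by_cases hjE : j ≤ Ef m
    · have := hp3 m hm j hj hjE
      rw [hx.1] at this; simp at this
    · have := hp4 m hm (j + 1) (by omega) (by omega)
      have h2 := hx.2
      rw [show m + j * T + T = m + (j + 1 : ℕ) * T by push_cast; ring, this] at h2
      simp at h2
  have hEmin : ∀ m, Ex m → ∀ j : ℕ, 1 ≤ j → z (m + j * T + T) = true → Ef m ≤ j := by
    intro m hm j hj hx
    by_contra hlt
    have := hp3 m hm (j + 1) (by omega) (by omega)
    rw [show m + j * T + T = m + (j + 1 : ℕ) * T by push_cast; ring, this] at hx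
    simp at hx
  obtain ⟨k0, hm0⟩ := hback 0
  set m0 := (0 : ℤ) - k0 * T with hm0def
  have he : z (m0 + Ef m0 * T) = false ∧ z (m0 + Ef m0 * T + T) = true := by
    have a := hp1 m0 hm0
    have b := hp2 m0 hm0
    refine ⟨hp3 m0 hm0 _ (by omega) le_rfl, ?_⟩
    rw [← hp4 m0 hm0 (Ef m0 + 1) (by omega) b]; congr 1; push_cast; ring
  have htr := transfer hPB hn hRig _ he
  have hGle : ∀ m m', Ex m → Ex m' → Gf m' ≤ Gf m + 2 := by
    intro m m' hm hm'
    have hx := hexG m hm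
    obtain ⟨u, hu, h1, h2⟩ := htr m m' hm hm' (Gf m * T) true hx.1 (by simpa using hx.2)
    have hu' := abs_le.1 hu
    have a := hp1 m hm
    have b := hp2 m hm
    have := hGmin m' hm' (Gf m + u).toNat (by omega) (by
      rw [Int.toNat_of_nonneg (by omega)]
      refine ⟨?_, ?_⟩
      · rw [← h1]; congr 1; ring
      · have h3 : z (m' + (Gf m + u) * T + T) = !true := by rw [← h2]; congr 1; ring
        simpa using h3)
    omega
  have hEle : ∀ m m', Ex m → Ex m' → Ef m' ≤ Ef m + 2 := by
    intro m m' hm hm'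
    have a := hp1 m hm
    have b := hp2 m hm
    obtain ⟨u, hu, h1, h2⟩ := htr m m' hm hm' (Ef m * T) false (hp3 m hm _ (by omega) le_rfl) (by
      simp only [Bool.not_false]
      rw [← hp4 m hm (Ef m + 1) (by omega) b]; congr 1; push_cast; ring)
    have hu' := abs_le.1 hu
    have := hEmin m' hm' (Ef m + u).toNat (by omega) (by
      rw [Int.toNat_of_nonneg (by omega)]
      have h3 : z (m' + (Ef m + u) * T + T) = !false := by rw [← h2]; congr 1; ring
      simpa using h3)
    omega
  -- distances between exits
  have hdist : ∀ w : ℕ, ∀ q, Ex q → Ex (q + w * T) → ∃ k : ℕ,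
      |(w : ℤ) - k * Gf m0| ≤ 2 * k := by
    intro w
    induction w using Nat.strong_induction_on with
    | _ w ih =>
      intro q hq hqw
      by_cases hw : w = 0
      · exact ⟨0, by simp [hw]⟩
      · have h1 := hGmin q hq w (by omega) hqw
        have h2 := hp1 q hq
        have h3 := hp2 q hq
        obtain ⟨k, hk⟩ := ih (w - Gf q) (by omega) (q + Gf q * T) (hexG q hq) (by
          rwa [show q + Gf q * T + (w - Gf q : ℕ) * T = q + w * T by push_cast [h1]; ring])
        have h4 := hGle q m0 hq hm0
        have h5 := hGle m0 q hm0 hq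
        refine ⟨k + 1, ?_⟩
        have hk' := abs_le.1 hk
        push_cast [h1] at hk' ⊢
        rw [abs_le]
        constructor <;> nlinarith
  have hdist' : ∀ w : ℤ, ∀ q, Ex q → Ex (q + w * T) → ∃ k : ℤ,
      |w - k * Gf m0| ≤ 2 * |k| := by
    intro w q hq hqw
    rcases le_total 0 w with hw | hw
    · obtain ⟨k, hk⟩ := hdist w.toNat q hq (by rwa [Int.toNat_of_nonneg hw])
      refine ⟨k, ?_⟩
      rw [Int.toNat_of_nonneg hw] at hk
      rwa [Nat.abs_cast]
    · obtain ⟨k, hk⟩ := hdist (-w).toNat (q + w * T) hqw (by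
        rw [Int.toNat_of_nonneg (by omega)]
        rwa [show q + w * T + -w * T = q by ring])
      refine ⟨-k, ?_⟩
      rw [Int.toNat_of_nonneg (by omega)] at hk
      rw [abs_neg, Nat.abs_cast, ← abs_neg]
      rwa [show -(w - -(k : ℤ) * Gf m0) = -w - k * Gf m0 by ring]
  -- J
  let J : ℤ → ℕ := fun p => Nat.find (hback p)
  have hJ : ∀ p, Ex (p - J p * T) := fun p => Nat.find_spec (hback p)
  have hJmin : ∀ p (k : ℕ), Ex (p - k * T) → J p ≤ k := fun p k h => Nat.find_min' (hback p) h
  have hJG : ∀ p, J p < Gf (p - J p * T) := by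
    intro p
    by_contra hge
    have h1 := hexG _ (hJ p)
    have h2 := hp1 _ (hJ p)
    have h3 := hp2 _ (hJ p)
    have := hJmin p (J p - Gf (p - J p * T)) (by
      convert h1 using 1
      push_cast [show Gf (p - J p * T) ≤ J p by omega]; ring)
    omega
  have hJz1 : ∀ p, 1 ≤ J p → J p ≤ Ef (p - J p * T) → z p = false := by
    intro p h1 h2
    have := hp3 _ (hJ p) (J p) h1 h2
    rwa [sub_add_cancel] at this
  have hJz2 : ∀ p, Ef (p - J p * T) < J p → z p = true := by
    intro p h1
    have := hp4 _ (hJ p) (J p) h1 (hJG p).le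
    rwa [sub_add_cancel] at this
  have a0 := hp1 m0 hm0
  have b0 := hp2 m0 hm0
  refine ⟨Gf m0, Ef m0, fun p => J p, by omega, by omega, by omega, ?_, ?_, ?_, ?_, ?_⟩
  · intro p
    have h1 := hJG p
    have h2 := hGle m0 _ hm0 (hJ p)
    constructor <;> simp only <;> omega
  · intro p h1 h2
    have h3 := hEle _ m0 (hJ p) hm0
    simp only at h1 h2
    exact hJz1 p (by omega) (by omega)
  · intro p h1
    have h3 := hEle m0 _ hm0 (hJ p)
    simp only at h1
    exact hJz2 p (by omega)
  · intro p d d'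
    have h1 := hJ p
    have h2 := hJ (p + d)
    have h3 := hJ (p + d')
    have h4 := hJ (p + d + d')
    obtain ⟨u, hu, g1, g2⟩ := htr _ _ h1 h3 (d + (J p - J (p + d)) * T) true
      (by rw [← h2.1]; congr 1; ring)
      (by rw [Bool.not_true, ← h2.2]; congr 1; ring)
    obtain ⟨k, hk⟩ := hdist' (J (p + d + d') + J p - J (p + d) - J (p + d') + u) _ h4 (by
      refine ⟨?_, ?_⟩
      · rw [← g1]; congr 1; ring
      · rw [Bool.not_true] at g2
        rw [← g2]; congr 1; ring)
    refine ⟨k, ?_⟩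
    simp only
    rw [abs_le] at hk hu ⊢
    constructor <;> linarith [hk.1, hk.2, hu.1, hu.2]
  · intro j h0 hj
    refine ⟨m0 + j * T, ?_⟩
    have h1 := hJmin (m0 + j * T) j.toNat (by
      rw [Int.toNat_of_nonneg h0]
      rwa [add_sub_cancel_right])
    by_contra hne
    have hlt : (J (m0 + j * T) : ℤ) < j := by
      simp only at hne
      omega
    have h2 := hJ (m0 + j * T)
    have := hGmin m0 hm0 (j - J (m0 + j * T)).toNat (by omega) (by
      rw [Int.toNat_of_nonneg (by omega)]
      convert h2 using 1; ring)
    omega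

/-! ### The rotation limit -/

theorem irr_unique {α κ : ℝ} (hα : Irrational α) {d d' : ℤ} {k k' : ℤ}
    (h : κ + d * α = k) (h' : κ + d' * α = k') : d = d' := by
  by_contra hne
  have h1 : ((d - d' : ℤ) : ℝ) * α = ((k - k' : ℤ) : ℝ) := by push_cast; linarith
  have h2 : Irrational (((d - d' : ℤ) : ℝ) * α) := hα.intCast_mul (sub_ne_zero.2 hne)
  rw [h1] at h2
  exact h2 ⟨((k - k' : ℤ) : ℚ), by push_cast; rfl⟩

theorem rot {z : ℤ → Bool} (hUR : URd z) (hNC : NoConst z) (hPB : PBd z) :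
    ∃ (α lam κ : ℝ) (zs : ℤ → Bool), Irrational α ∧ 0 < lam ∧ lam < 1 ∧
      (∀ R : ℤ, ∃ p : ℤ, ∀ i : ℤ, |i| ≤ R → z (p + i) = zs i) ∧
      (∀ d : ℤ, 0 < Int.fract (κ + d * α) → Int.fract (κ + d * α) < lam → zs d = false) ∧
      (∀ d : ℤ, lam < Int.fract (κ + d * α) → zs d = true) := by
  classical
  choose G E J hG hE0 hEG hJ hJ0 hJ1 hJa hJs using
    fun n : ℕ => line_interface hUR hNC hPB (n + 8) (by omega)
  let U : Ultrafilter ℕ := Filter.hyperfilter ℕ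
  have hUle : (U : Filter ℕ) ≤ Filter.atTop := by
    rw [← Nat.cofinite_eq_atTop]; exact Filter.hyperfilter_le_cofinite
  have hGpos : ∀ n, (0 : ℝ) < G n := fun n => by
    have := hG n; push_cast at this; exact_mod_cast (by omega : 0 < G n)
  have hG8 : ∀ n, 8 ≤ G n := fun n => by
    have := hG n; push_cast at this; omega
  have hulim : ∀ a : ℕ → ℝ, (∀ n, a n ∈ Set.Icc (0 : ℝ) 2) →
      ∃ l, Filter.Tendsto a U (nhds l) := by
    intro a ha
    obtain ⟨l, -, hl⟩ := (isCompact_Icc (a := (0 : ℝ)) (b := 2)).ultrafilter_le_nhds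
      (U.map a) (by
        rw [Filter.le_principal_iff]
        exact Filter.mem_map.2 (Filter.Eventually.of_forall ha))
    exact ⟨l, hl⟩
  have hinv : ∀ c : ℝ, Filter.Tendsto (fun n => c / (G n : ℝ)) U (nhds 0) := by
    intro c
    have h1 : Filter.Tendsto (fun n => (G n : ℝ)) Filter.atTop Filter.atTop := by
      refine Filter.tendsto_atTop_mono (f := fun n : ℕ => (n : ℝ)) (fun n => ?_)
        tendsto_natCast_atTop_atTop
      have := hG n
      push_cast at this
      exact_mod_cast (by omega : (n : ℤ) ≤ G n)
    exact ((tendsto_const_nhds (x := c)).div_atTop h1).mono_left hUle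
  obtain ⟨lam, hlam⟩ := hulim (fun n => (E n : ℝ) / G n) (fun n => by
    have h1 : (0 : ℝ) ≤ E n := by exact_mod_cast hE0 n
    have h2 : (E n : ℝ) ≤ G n := by exact_mod_cast hEG n
    refine ⟨div_nonneg h1 (hGpos n).le, ?_⟩
    rw [div_le_iff₀ (hGpos n)]; linarith [hGpos n])
  have hlam0 : 0 ≤ lam := ge_of_tendsto hlam (Filter.Eventually.of_forall fun n =>
    div_nonneg (by exact_mod_cast hE0 n) (hGpos n).le)
  have hlam1 : lam ≤ 1 := le_of_tendsto hlam (Filter.Eventually.of_forall fun n => by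
    rw [div_le_one (hGpos n)]; exact_mod_cast hEG n)
  obtain ⟨κ, hκ0, hκ1, hκl⟩ : ∃ κ : ℝ, 0 < κ ∧ κ < 1 ∧ κ ≠ lam := by
    by_cases h : lam = 1 / 2
    · exact ⟨1 / 4, by norm_num, by norm_num, by rw [h]; norm_num⟩
    · exact ⟨1 / 2, by norm_num, by norm_num, fun h' => h h'.symm⟩
  have hp : ∀ n, ∃ p, J n p = ⌊κ * G n⌋ := by
    intro n
    apply hJs
    · exact Int.floor_nonneg.2 (mul_nonneg hκ0.le (hGpos n).le)
    · rw [Int.floor_lt]; nlinarith [hGpos n]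
  choose p hp using hp
  have hr : ∀ d : ℤ, ∃ l, Filter.Tendsto (fun n => (J n (p n + d) : ℝ) / G n) U (nhds l) := by
    intro d
    apply hulim
    intro n
    have h := hJ n (p n + d)
    have h1 : (0 : ℝ) ≤ J n (p n + d) := by exact_mod_cast h.1
    have h2 : (J n (p n + d) : ℝ) ≤ 2 * G n := by
      have := hG8 n; exact_mod_cast (by omega : J n (p n + d) ≤ 2 * G n)
    refine ⟨div_nonneg h1 (hGpos n).le, ?_⟩
    rwa [div_le_iff₀ (hGpos n)]
  choose ρ hρ using hr
  have hρ0 : ρ 0 = κ := by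
    refine tendsto_nhds_unique (hρ 0) ?_
    rw [tendsto_iff_dist_tendsto_zero]
    refine squeeze_zero (fun _ => dist_nonneg) (fun n => ?_) (hinv 1)
    rw [Real.dist_eq, add_zero, hp]
    have h1 := Int.floor_le (κ * G n)
    have h2 := Int.lt_floor_add_one (κ * G n)
    rw [show (⌊κ * G n⌋ : ℝ) / G n - κ = (⌊κ * G n⌋ - κ * G n) / G n by
      have := (hGpos n).ne'; field_simp, abs_div, abs_of_pos (hGpos n)]
    refine div_le_div_of_nonneg_right ?_ (hGpos n).le
    rw [abs_le]; constructor <;> linarith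
  have hρnn : ∀ d, 0 ≤ ρ d := fun d => ge_of_tendsto (hρ d) (Filter.Eventually.of_forall fun n =>
    div_nonneg (by exact_mod_cast (hJ n _).1) (hGpos n).le)
  have hρle : ∀ d, ρ d ≤ 1 := by
    intro d
    have h1 := (hρ d).sub (hinv 2)
    rw [sub_zero] at h1
    refine le_of_tendsto h1 (Filter.Eventually.of_forall fun n => ?_)
    rw [← sub_div, div_le_one (hGpos n)]
    have : (J n (p n + d) : ℝ) ≤ G n + 2 := by exact_mod_cast (hJ n (p n + d)).2
    linarith
  have hcob : ∀ d d', ∃ k : ℤ, ρ (d + d') + ρ 0 - ρ d - ρ d' = k := by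
    intro d d'
    have hlim := (((hρ (d + d')).add (hρ 0)).sub (hρ d)).sub (hρ d')
    choose k hk using fun n => hJa n (p n) d d'
    have hk8 : ∀ n, |J n (p n + d + d') + J n (p n) - J n (p n + d) - J n (p n + d') - k n * G n| ≤ 8 := by
      intro n
      have h0 := hk n
      have h1 := hJ n (p n + d + d')
      have h2 := hJ n (p n)
      have h3 := hJ n (p n + d)
      have h4 := hJ n (p n + d')
      have h5 := hG8 n
      have : |k n| ≤ 3 := by
        by_contra hgt
        have hgt : 4 ≤ |k n| := by omega
        have h6 : |k n * G n| ≤ 2 * G n + 4 + 2 + 2 * |k n| := by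
          rw [abs_le] at h0 ⊢
          constructor <;> linarith [h0.1, h0.2]
        rw [abs_mul, abs_of_pos (show 0 < G n by omega)] at h6
        nlinarith
      omega
    have hklim : Filter.Tendsto (fun n => (k n : ℝ)) U
        (nhds (ρ (d + d') + ρ 0 - ρ d - ρ d')) := by
      refine tendsto_of_tendsto_of_dist hlim ?_
      refine squeeze_zero (fun _ => dist_nonneg) (fun n => ?_) (hinv 8)
      rw [Real.dist_eq]
      have h9 : |((J n (p n + d + d') : ℝ) + J n (p n) - J n (p n + d) - J n (p n + d') - k n * G n)| ≤ 8 := by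
        exact_mod_cast hk8 n
      rw [← add_assoc, add_zero, ← add_div, ← sub_div, ← sub_div,
        show ∀ a : ℝ, a / G n - k n = (a - k n * G n) / G n by
          intro a; have := (hGpos n).ne'; field_simp, abs_div, abs_of_pos (hGpos n)]
      exact div_le_div_of_nonneg_right h9 (hGpos n).le
    have hcl : IsClosed (Set.range ((↑) : ℤ → ℝ)) := Int.isClosedEmbedding_coe_real.isClosed_range
    obtain ⟨k, hk⟩ := hcl.mem_of_tendsto hklim (Filter.Eventually.of_forall fun n => ⟨k n, rfl⟩)
    exact ⟨k, hk.symm⟩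
  set α := ρ 1 - κ with hα
  have haff : ∀ d : ℤ, ∃ k : ℤ, ρ d = κ + d * α + k := by
    intro d
    induction d using Int.induction_on with
    | zero => exact ⟨0, by simp [hρ0]⟩
    | succ i ih =>
      obtain ⟨k, hk⟩ := ih
      obtain ⟨k', hk'⟩ := hcob i 1
      refine ⟨k + k', ?_⟩
      push_cast at hk ⊢
      rw [hρ0] at hk'
      linarith
    | pred i ih =>
      obtain ⟨k, hk⟩ := ih
      obtain ⟨k', hk'⟩ := hcob (-(i : ℤ) - 1) 1
      refine ⟨k - k', ?_⟩
      rw [hρ0, sub_add_cancel] at hk'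
      push_cast at hk ⊢
      linarith
  have hfr : ∀ d : ℤ, Int.fract (κ + d * α) ≠ 0 → ρ d = Int.fract (κ + d * α) := by
    intro d hne
    obtain ⟨k, hk⟩ := haff d
    have h1 : Int.fract (ρ d) = Int.fract (κ + d * α) := by rw [hk, Int.fract_add_intCast]
    rw [← h1] at hne ⊢
    rcases (hρle d).lt_or_eq with h | h
    · exact (Int.fract_eq_self.2 ⟨hρnn d, h⟩).symm
    · rw [h] at hne; simp at hne
  have hzs : ∀ d : ℤ, ∃ b : Bool, ∀ᶠ n in (U : Filter ℕ), z (p n + d) = b := by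
    intro d
    rcases U.em (fun n => z (p n + d) = true) with h | h
    · exact ⟨true, h⟩
    · exact ⟨false, h.mono fun n hn => by simpa using hn⟩
  choose zs hzs using hzs
  have hF0 : ∀ d, 0 < ρ d → ρ d < lam → zs d = false := by
    intro d h0 h1
    have l1 := (hlam.sub (hρ d)).sub (hinv 3)
    rw [sub_zero] at l1
    have e1 := l1.eventually (lt_mem_nhds (sub_pos.2 h1))
    have e2 := (hρ d).eventually (lt_mem_nhds h0)
    obtain ⟨n, hn1, hn2, hn3⟩ := (e1.and (e2.and (hzs d))).exists
    rw [← hn3]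
    apply hJ0 n
    · have : (0 : ℝ) < J n (p n + d) := by
        by_contra hle
        exact absurd hn2 (not_lt.2 (div_nonpos_of_nonpos_of_nonneg (not_lt.1 hle) (hGpos n).le))
      have : 0 < J n (p n + d) := by exact_mod_cast this
      omega
    · rw [← sub_div, ← sub_div] at hn1
      have := (div_pos_iff_of_pos_right (hGpos n)).1 hn1
      have : (0 : ℤ) < E n - J n (p n + d) - 3 := by exact_mod_cast this
      omega
  have hF1 : ∀ d, lam < ρ d → zs d = true := by
    intro d h1
    have l1 := ((hρ d).sub hlam).sub (hinv 3)
    rw [sub_zero] at l1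
    have e1 := l1.eventually (lt_mem_nhds (sub_pos.2 h1))
    obtain ⟨n, hn1, hn3⟩ := (e1.and (hzs d)).exists
    rw [← hn3]
    apply hJ1 n
    rw [← sub_div, ← sub_div] at hn1
    have := (div_pos_iff_of_pos_right (hGpos n)).1 hn1
    have : (0 : ℤ) < J n (p n + d) - E n - 3 := by exact_mod_cast this
    omega
  have hocc : ∀ R : ℤ, ∃ q : ℤ, ∀ i : ℤ, |i| ≤ R → z (q + i) = zs i := by
    intro R
    have : ∀ᶠ n in (U : Filter ℕ), ∀ i ∈ Finset.Icc (-R) R, z (p n + i) = zs i :=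
      (Filter.eventually_all_finset _).2 fun i _ => hzs i
    obtain ⟨n, hn⟩ := this.exists
    exact ⟨p n, fun i hi => hn i (Finset.mem_Icc.2 (abs_le.1 hi))⟩
  have hnoconst : ∀ (Q : ℤ) (s : ℤ) (c : Bool), 0 < Q →
      (∀ k : ℤ, 0 ≤ k → zs (s + k * Q) = c) → False := by
    intro Q s c hQ hc
    obtain ⟨K, hK, hbr⟩ := bounded_ret hUR hNC Q hQ
    obtain ⟨q, hq⟩ := hocc (|s| + K * Q)
    obtain ⟨k, hk0, hkK, hk⟩ := hbr (q + s) (!c)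
    rw [add_assoc, hq (s + k * Q) (by
      refine (abs_add_le _ _).trans ?_
      rw [abs_of_nonneg (mul_nonneg hk0 hQ.le)]
      nlinarith), hc k hk0] at hk
    simp at hk
  have hirr : Irrational α := by
    rintro ⟨a, ha⟩
    have hden : (0 : ℤ) < a.den := by exact_mod_cast a.den_pos
    have hρc : ∀ k : ℤ, ρ (0 + k * a.den) = κ := by
      intro k
      have h1 : Int.fract (κ + ((0 + k * a.den : ℤ) : ℝ) * α) = κ := by
        have h2 : (a.den : ℝ) * α = a.num := by
          rw [← ha]; exact_mod_cast Rat.den_mul_eq_num a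
        have h3 : ((0 + k * a.den : ℤ) : ℝ) * α = ((k * a.num : ℤ) : ℝ) := by
          push_cast
          rw [zero_add, mul_assoc, h2]
        rw [h3, Int.fract_add_intCast, Int.fract_eq_self.2 ⟨hκ0.le, hκ1⟩]
      rw [hfr _ (by rw [h1]; exact hκ0.ne'), h1]
    rcases lt_or_gt_of_ne hκl with h | h
    · exact hnoconst a.den 0 false hden fun k _ => hF0 _ (by rw [hρc]; exact hκ0) (by rwa [hρc])
    · exact hnoconst a.den 0 true hden fun k _ => hF1 _ (by rwa [hρc])
  obtain ⟨s, hs⟩ : ∃ s : ℤ, ∀ d, s ≤ d → 0 < ρ d ∧ ρ d < 1 := by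
    have hgood : ∀ d : ℤ, Int.fract (κ + d * α) ≠ 0 → 0 < ρ d ∧ ρ d < 1 := by
      intro d hd
      rw [hfr d hd]
      exact ⟨lt_of_le_of_ne (Int.fract_nonneg _) hd.symm, Int.fract_lt_one _⟩
    by_cases hbad : ∃ d0 : ℤ, Int.fract (κ + d0 * α) = 0
    · obtain ⟨d0, h0⟩ := hbad
      refine ⟨d0 + 1, fun d hd => hgood d fun h => ?_⟩
      obtain ⟨k, hk⟩ := Int.fract_eq_zero_iff.1 h0
      obtain ⟨k', hk'⟩ := Int.fract_eq_zero_iff.1 h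
      have := irr_unique hirr hk.symm hk'.symm
      omega
    · push Not at hbad
      exact ⟨0, fun d _ => hgood d (hbad d)⟩
  refine ⟨α, lam, κ, zs, hirr, ?_, ?_, hocc, ?_, ?_⟩
  · refine lt_of_le_of_ne hlam0 fun h => ?_
    refine hnoconst 1 s true one_pos fun k hk => hF1 _ ?_
    rw [← h]; exact (hs _ (by omega)).1
  · refine lt_of_le_of_ne hlam1 fun h => ?_
    refine hnoconst 1 s false one_pos fun k hk => hF0 _ (hs _ (by omega)).1 ?_
    rw [h]; exact (hs _ (by omega)).2
  · intro d h0 h1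
    have := hfr d h0.ne'
    exact hF0 d (by rw [this]; exact h0) (by rw [this]; exact h1)
  · intro d h0
    have := hfr d (by linarith)
    exact hF1 d (by rw [this]; exact h0)

/-! ### Coding patterns -/

/-- coding of the circle: `false` on `[0,lam)`, `true` on `[lam,1)` -/
noncomputable def code (lam r : ℝ) : Bool := decide (lam ≤ Int.fract r)

theorem code_false {lam r y : ℝ} (hl : lam < 1) (k : ℤ) (h : r = y + k) (h0 : 0 ≤ y)
    (h1 : y < lam) : code lam r = false := by
  have : Int.fract r = y := by
    rw [h, Int.fract_add_intCast, Int.fract_eq_self.2 ⟨h0, by linarith⟩]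
  simp [code, this, h1]

theorem code_true {lam r y : ℝ} (hl : 0 < lam) (k : ℤ) (h : r = y + k) (h0 : lam ≤ y)
    (h1 : y < 1) : code lam r = true := by
  have : Int.fract r = y := by
    rw [h, Int.fract_add_intCast, Int.fract_eq_self.2 ⟨by linarith, h1⟩]
  simp [code, this, h0]

/-- `ε`-density of the points `s * α`, `s ∈ τ` -/
def DenseT (α : ℝ) (τ : Finset ℤ) (ε : ℝ) : Prop :=
  ∀ y : ℝ, ∃ s ∈ τ, Int.fract (y + s * α) < ε

theorem code_sep {α lam ε : ℝ} (hl0 : 0 < lam) (hl1 : lam < 1) (hε1 : ε ≤ lam) (hε2 : ε ≤ 1 - lam)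
    {τ : Finset ℤ} (hD : DenseT α τ ε) (p p' : ℝ)
    (h : ∀ s ∈ τ, code lam (p + s * α) = code lam (p' + s * α)) :
    Int.fract (p' - p) < ε ∨ 1 - ε < Int.fract (p' - p) := by
  by_contra hcon
  push Not at hcon
  obtain ⟨h1, h2⟩ := hcon
  have hfl := Int.floor_add_fract (p' - p)
  set D := Int.fract (p' - p) with hDd
  set k := ⌊p' - p⌋ with hk
  by_cases c1 : D ≤ 1 - lam
  · obtain ⟨s, hs, hlt⟩ := hD p'
    have hge := Int.fract_nonneg (p' + s * α)
    have hf := Int.floor_add_fract (p' + s * α)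
    set f := Int.fract (p' + s * α)
    have a1 : code lam (p' + s * α) = false :=
      code_false hl1 ⌊p' + s * α⌋ (y := f) (by linarith) hge (by linarith)
    have a2 : code lam (p + s * α) = true :=
      code_true hl0 (⌊p' + s * α⌋ - k - 1) (y := f - D + 1) (by push_cast; linarith) (by linarith)
        (by linarith)
    have := h s hs
    rw [a1, a2] at this; simp at this
  by_cases c2 : lam ≤ D
  · obtain ⟨s, hs, hlt⟩ := hD p
    have hge := Int.fract_nonneg (p + s * α)
    have hf := Int.floor_add_fract (p + s * α)
    set f := Int.fract (p + s * α)
    have a1 : code lam (p + s * α) = false :=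
      code_false hl1 ⌊p + s * α⌋ (y := f) (by linarith) hge (by linarith)
    have a2 : code lam (p' + s * α) = true :=
      code_true hl0 (⌊p + s * α⌋ + k) (y := f + D) (by push_cast; linarith) (by linarith)
        (by linarith)
    have := h s hs
    rw [a1, a2] at this; simp at this
  · obtain ⟨s, hs, hlt⟩ := hD (p' - lam)
    have hge := Int.fract_nonneg (p' - lam + s * α)
    have hf := Int.floor_add_fract (p' - lam + s * α)
    set f := Int.fract (p' - lam + s * α)
    have a1 : code lam (p' + s * α) = true :=
      code_true hl0 ⌊p' - lam + s * α⌋ (y := lam + f) (by linarith) (by linarith) (by linarith)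
    have a2 : code lam (p + s * α) = false :=
      code_false hl1 (⌊p' - lam + s * α⌋ - k) (y := lam + f - D) (by push_cast; linarith)
        (by linarith) (by linarith)
    have := h s hs
    rw [a1, a2] at this; simp at this

/-- the critical points -/
noncomputable def crit (α lam : ℝ) (i : ℤ × Bool) : ℝ := (if i.2 then lam else 0) - i.1 * α

theorem crit_diff {α lam ε : ℝ} (hl0 : 0 < lam) (hl1 : lam < 1) (hε1 : ε ≤ lam) (hε2 : ε ≤ 1 - lam)
    (i : ℤ × Bool) (p : ℝ) (h0 : 0 < Int.fract (crit α lam i - p))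
    (h1 : Int.fract (crit α lam i - p) < ε) :
    code lam (p + i.1 * α) ≠ code lam (crit α lam i + i.1 * α) := by
  have hfl := Int.floor_add_fract (crit α lam i - p)
  set D := Int.fract (crit α lam i - p)
  set k := ⌊crit α lam i - p⌋
  obtain ⟨s, b⟩ := i
  cases b
  · simp only [crit, Bool.false_eq_true, if_false] at hfl ⊢
    rw [code_false (r := 0 - s * α + s * α) hl1 0 (y := 0) (by push_cast; ring) le_rfl hl0,
      code_true hl0 (-k - 1) (y := 1 - D) (by push_cast; linarith) (by linarith) (by linarith)]
    simp
  · simp only [crit, if_true] at hfl ⊢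
    rw [code_true (r := lam - s * α + s * α) hl0 0 (y := lam) (by push_cast; ring) le_rfl hl1,
      code_false hl1 (-k) (y := lam - D) (by push_cast; linarith) (by linarith) (by linarith)]
    simp

theorem crit_distinct {α lam ε : ℝ} (hα : Irrational α) (hl0 : 0 < lam) (hl1 : lam < 1)
    (hε1 : ε ≤ lam) (hε2 : ε ≤ 1 - lam)
    {τ : Finset ℤ} (hD : DenseT α τ ε)
    (hgood : ∀ s ∈ τ, ∀ s' ∈ τ, ∀ k : ℤ, ((s : ℝ) - s') * α - lam ≠ k)
    (i j : ℤ × Bool) (hi : i.1 ∈ τ) (hj : j.1 ∈ τ) (hij : i ≠ j) :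
    ∃ s ∈ τ, code lam (crit α lam i + s * α) ≠ code lam (crit α lam j + s * α) := by
  by_contra hcon
  push Not at hcon
  have hne : ∀ k : ℤ, crit α lam j - crit α lam i ≠ k := by
    intro k hk
    obtain ⟨s, b⟩ := i
    obtain ⟨s', b'⟩ := j
    cases b <;> cases b' <;> simp only [crit, Bool.false_eq_true, if_false, if_true] at hk
    · have := irr_unique (κ := 0) hα (d := s - s') (d' := 0) (k := k) (k' := 0)
        (by push_cast; linarith) (by simp)
      exact hij (by rw [show s = s' by omega])
    · exact hgood s' hj s hi (-k) (by push_cast; linarith)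
    · exact hgood s hi s' hj k (by linarith)
    · have := irr_unique (κ := 0) hα (d := s - s') (d' := 0) (k := k) (k' := 0)
        (by push_cast; linarith) (by simp)
      exact hij (by rw [show s = s' by omega])
  have hpos : 0 < Int.fract (crit α lam j - crit α lam i) := by
    refine lt_of_le_of_ne (Int.fract_nonneg _) fun h => ?_
    obtain ⟨k, hk⟩ := Int.fract_eq_zero_iff.1 h.symm
    exact hne k hk.symm
  rcases code_sep hl0 hl1 hε1 hε2 hD _ _ hcon with h | h
  · exact crit_diff hl0 hl1 hε1 hε2 j _ hpos h (hcon _ hj)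
  · have e : Int.fract (crit α lam i - crit α lam j) =
        1 - Int.fract (crit α lam j - crit α lam i) := by
      rw [← Int.fract_neg hpos.ne', neg_sub]
    exact crit_diff hl0 hl1 hε1 hε2 i _ (by rw [e]; linarith [Int.fract_lt_one (crit α lam j - crit α lam i)])
      (by rw [e]; linarith) (hcon _ hi).symm

theorem irr_dense {α : ℝ} (hα : Irrational α) (y δ : ℝ) (hδ : 0 < δ) :
    ∃ m : ℤ, 0 < Int.fract (y + m * α) ∧ Int.fract (y + m * α) < δ := by
  have hd : Dense ((AddSubgroup.closure {α, 1} : AddSubgroup ℝ) : Set ℝ) :=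
    dense_addSubgroupClosure_pair_iff.2 (by simpa using hα)
  obtain ⟨v, hv, hv'⟩ := hd.exists_mem_open (isOpen_Ioo (a := -y) (b := -y + min δ 1))
    ⟨-y + min δ 1 / 2, by constructor <;> linarith [lt_min hδ one_pos]⟩
  obtain ⟨m, k, hmk⟩ := AddSubgroup.mem_closure_pair.1 hv
  refine ⟨m, ?_⟩
  have hfr : Int.fract (y + m * α) = y + v := by
    rw [show y + m * α = y + v + (-k : ℤ) by
      rw [← hmk]; push_cast; simp only [zsmul_eq_mul, mul_one]; ring, Int.fract_add_intCast, Int.fract_eq_self.2]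
    have := min_le_right δ 1
    constructor <;> linarith [hv'.1, hv'.2]
  rw [hfr]
  have := min_le_left δ 1
  constructor <;> linarith [hv'.1, hv'.2]

theorem pos_dense {α : ℝ} (hα : Irrational α) (Q : ℤ) (hQ : Q ≠ 0) (ε : ℝ) (hε : 0 < ε) :
    ∃ N : ℤ, 0 ≤ N ∧ ∀ (y : ℝ) (a : ℤ), ∃ j : ℤ, a ≤ j ∧ j ≤ a + N ∧
      Int.fract (y + (j * Q : ℤ) * α) < ε := by
  have hβ : Irrational ((Q : ℝ) * α) := hα.intCast_mul hQ
  obtain ⟨m, h0, h1⟩ := irr_dense hβ 0 ε hε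
  rw [zero_add] at h0 h1
  have hfl := Int.floor_add_fract ((m : ℝ) * (Q * α))
  set δ := Int.fract ((m : ℝ) * (Q * α))
  set k := ⌊(m : ℝ) * (Q * α)⌋
  set C : ℤ := ⌈1 / δ⌉ + 1
  have hC0 : 0 ≤ C := by
    have : 0 ≤ ⌈1 / δ⌉ := Int.ceil_nonneg (by positivity)
    omega
  refine ⟨C * |m|, mul_nonneg hC0 (abs_nonneg _), fun y a => ?_⟩
  set w := y + (a * Q : ℤ) * α with hw
  have hwf := Int.floor_add_fract w
  have hw0 := Int.fract_nonneg w
  have hw1 := Int.fract_lt_one w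
  set f := Int.fract w
  rcases le_total 0 m with hm | hm
  · set l : ℤ := ⌈(1 - f) / δ⌉
    have l0 : 0 ≤ l := Int.ceil_nonneg (div_nonneg (by linarith) h0.le)
    have l1 : l ≤ C := by
      have : l ≤ ⌈1 / δ⌉ := Int.ceil_le_ceil (by gcongr; linarith)
      omega
    have l2 : (1 - f) ≤ l * δ := by
      rw [← div_le_iff₀ h0]; exact Int.le_ceil _
    have l3 : l * δ < 1 - f + δ := by
      have := Int.ceil_lt_add_one ((1 - f) / δ)
      have h4 : ((1 - f) / δ + 1) * δ = 1 - f + δ := by field_simp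
      rw [← h4]; gcongr
    refine ⟨a + l * m, by nlinarith, by rw [abs_of_nonneg hm]; nlinarith, ?_⟩
    have hpre : y + ((a + l * m) * Q : ℤ) * α = (f + l * δ) + (⌊w⌋ + l * k : ℤ) := by
      have : (l : ℝ) * (m * (Q * α)) = l * (k + δ) := by rw [hfl]
      push_cast at hw this ⊢
      linarith
    rw [hpre, Int.fract_add_intCast]
    have h5 := Int.fract_lt_one (f + l * δ)
    by_cases hbig : f + l * δ - 1 < 1
    · rw [← Int.fract_sub_one, Int.fract_eq_self.2 ⟨by linarith, hbig⟩]; linarith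
    · linarith
  · set l : ℤ := ⌊f / δ⌋
    have l0 : 0 ≤ l := Int.floor_nonneg.2 (div_nonneg (by linarith) h0.le)
    have l1 : l ≤ C := by
      have h2 : f / δ ≤ 1 / δ := by gcongr
      have h3 : (l : ℝ) ≤ ⌈1 / δ⌉ := (Int.floor_le _).trans (h2.trans (Int.le_ceil _))
      have : l ≤ ⌈1 / δ⌉ := by exact_mod_cast h3
      omega
    have l2 : l * δ ≤ f := by
      rw [← le_div_iff₀ h0]; exact Int.floor_le _
    have l3 : f < l * δ + δ := by
      have := Int.lt_floor_add_one (f / δ)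
      rw [div_lt_iff₀ h0] at this
      linarith
    refine ⟨a + l * (-m), by nlinarith, by rw [abs_of_nonpos hm]; nlinarith, ?_⟩
    have hpre : y + ((a + l * (-m)) * Q : ℤ) * α = (f - l * δ) + (⌊w⌋ - l * k : ℤ) := by
      have : (l : ℝ) * (m * (Q * α)) = l * (k + δ) := by rw [hfl]
      push_cast at hw this ⊢
      linarith
    rw [hpre, Int.fract_add_intCast, Int.fract_eq_self.2 ⟨by linarith, by
      have : 0 ≤ l * δ := mul_nonneg (by exact_mod_cast l0) h0.le
      linarith⟩]
    linarith

/-- the coding patterns occur in the limit sequence -/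
theorem code_occ {α lam κ : ℝ} {zs : ℤ → Bool} (hα : Irrational α) (hl0 : 0 < lam) (hl1 : lam < 1)
    (hF : ∀ d : ℤ, 0 < Int.fract (κ + d * α) → Int.fract (κ + d * α) < lam → zs d = false)
    (hT : ∀ d : ℤ, lam < Int.fract (κ + d * α) → zs d = true)
    (p : ℝ) (τ : Finset ℤ) : ∃ m : ℤ, ∀ s ∈ τ, zs (m + s) = code lam (p + s * α) := by
  have hgap : ∃ δ : ℝ, 0 < δ ∧ ∀ s ∈ τ, ∀ f : ℝ, f = Int.fract (p + s * α) →
      (f < lam → f + δ ≤ lam) ∧ (f + δ ≤ 1) := by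
    induction τ using Finset.induction_on with
    | empty => exact ⟨1, one_pos, by simp⟩
    | insert a t ha ih =>
      obtain ⟨δ, h0, h⟩ := ih
      set fa := Int.fract (p + a * α) with hfa
      have hfa1 := Int.fract_lt_one (p + a * α)
      have : ∃ δ' : ℝ, 0 < δ' ∧ (fa < lam → fa + δ' ≤ lam) ∧ (fa + δ' ≤ 1) := by
        by_cases hc : fa < lam
        · exact ⟨lam - fa, by linarith, fun _ => by linarith, by linarith⟩
        · exact ⟨1 - fa, by linarith, fun h => absurd h hc, by linarith⟩
      obtain ⟨δ', h0', h1', h2'⟩ := this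
      have m1 := min_le_left δ δ'
      have m2 := min_le_right δ δ'
      refine ⟨min δ δ', lt_min h0 h0', fun s hs f hf => ?_⟩
      rcases Finset.mem_insert.1 hs with rfl | hs
      · rw [← hfa] at hf
        rw [hf]
        exact ⟨fun h => by linarith [h1' h], by linarith⟩
      · obtain ⟨g1, g2⟩ := h s hs f hf
        exact ⟨fun h => by linarith [g1 h], by linarith⟩
  obtain ⟨δ, hδ, hgap⟩ := hgap
  obtain ⟨m, h0, h1⟩ := irr_dense hα (κ - p) δ hδ
  refine ⟨m, fun s hs => ?_⟩
  have hfl := Int.floor_add_fract (κ - p + m * α)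
  set e := Int.fract (κ - p + m * α)
  have hfl2 := Int.floor_add_fract (p + s * α)
  have hnn := Int.fract_nonneg (p + s * α)
  obtain ⟨g1, g2⟩ := hgap s hs _ rfl
  set f := Int.fract (p + s * α) with hf
  have hfr : Int.fract (κ + (m + s : ℤ) * α) = f + e := by
    rw [show κ + (m + s : ℤ) * α = f + e + (⌊κ - p + m * α⌋ + ⌊p + s * α⌋ : ℤ) by
      push_cast; linarith, Int.fract_add_intCast, Int.fract_eq_self.2 ⟨by linarith, by linarith⟩]
  by_cases hc : f < lam
  · rw [hF (m + s) (by rw [hfr]; linarith) (by rw [hfr]; linarith [g1 hc])]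
    simp [code, ← hf, hc]
  · rw [hT (m + s) (by rw [hfr]; linarith)]
    simp [code, ← hf, not_lt.1 hc]

/-- the exceptional difference -/
theorem exists_bad_diff {α lam : ℝ} (hα : Irrational α) (hl0 : 0 < lam) (hl1 : lam < 1) :
    ∃ K : ℤ, 0 < K ∧ ∀ s s' k : ℤ, ((s : ℝ) - s') * α - lam = k → s - s' = K ∨ s' - s = K := by
  by_cases h : ∃ c k : ℤ, (c : ℝ) * α - lam = k
  · obtain ⟨c, k, hc⟩ := h
    have hc0 : c ≠ 0 := by
      rintro rfl
      have h1 : (-lam : ℝ) = k := by rw [← hc]; simp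
      have h2 : (k : ℝ) < 0 := by linarith
      have h3 : (-1 : ℝ) < k := by linarith
      have h2 : k < 0 := by exact_mod_cast h2
      have h3 : -1 < k := by exact_mod_cast h3
      omega
    refine ⟨|c|, abs_pos.2 hc0, fun s s' k' h' => ?_⟩
    have := irr_unique (κ := -lam) hα (d := s - s') (d' := c) (k := k') (k' := k)
      (by push_cast; linarith) (by linarith)
    rcases abs_cases c with h | h <;> omega
  · push Not at h
    refine ⟨1, one_pos, fun s s' k h' => absurd ?_ (h (s - s') k)⟩
    push_cast; exact h'

/-! ### The rotation case -/

theorem late_trans {X z zs : ℤ → Bool} (hL : LateOcc X z)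
    (hocc : ∀ R : ℤ, ∃ p : ℤ, ∀ i : ℤ, |i| ≤ R → z (p + i) = zs i) : LateOcc X zs := by
  intro R N
  obtain ⟨q, hq⟩ := hocc R
  obtain ⟨m, hm, h⟩ := hL (|q| + R) N
  have := neg_abs_le q
  refine ⟨m + q, by omega, fun i hi => ?_⟩
  rw [add_assoc, h (q + i) ((abs_add_le _ _).trans (by omega)), hq i hi]

theorem late_finset {X zs : ℤ → Bool} (hL : LateOcc X zs) (τ : Finset ℤ) (m : ℤ) :
    ∃ m' : ℤ, ∀ s ∈ τ, 0 ≤ m' + s ∧ X (m' + s) = zs (m + s) := by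
  set R := ∑ s ∈ τ, |m + s|
  have hR : ∀ s ∈ τ, |m + s| ≤ R := fun s hs =>
    Finset.single_le_sum (f := fun s => |m + s|) (fun _ _ => abs_nonneg _) hs
  obtain ⟨q, hq, h⟩ := hL R 0
  refine ⟨q + m, fun s hs => ?_⟩
  have h1 := hR s hs
  have h2 := abs_le.1 h1
  exact ⟨by omega, by rw [add_assoc, h _ h1]⟩

theorem match_pattern {X zs : ℤ → Bool} (hX : XBd X) (hL : LateOcc X zs) {α lam κ ε : ℝ}
    (hα : Irrational α) (hl0 : 0 < lam) (hl1 : lam < 1)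
    (hF : ∀ d : ℤ, 0 < Int.fract (κ + d * α) → Int.fract (κ + d * α) < lam → zs d = false)
    (hT : ∀ d : ℤ, lam < Int.fract (κ + d * α) → zs d = true)
    (hε1 : ε ≤ lam) (hε2 : ε ≤ 1 - lam) {τ : Finset ℤ} (hD : DenseT α τ ε)
    (hgood : ∀ s ∈ τ, ∀ s' ∈ τ, ∀ k : ℤ, ((s : ℝ) - s') * α - lam ≠ k)
    (hpos : ∀ s ∈ τ, 0 ≤ s) : ∃ p : ℝ, ∀ s ∈ τ, X s = code lam (p + s * α) := by
  classical
  by_contra hcon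
  push Not at hcon
  have hne : τ.Nonempty := by
    obtain ⟨s, hs, -⟩ := hD 0
    exact ⟨s, hs⟩
  let u : Option (τ × Bool) → ℤ → Bool := fun o => match o with
    | none => X
    | some (s, b) => fun t => code lam (crit α lam ((s : ℤ), b) + t * α)
  have hcard := hX (Option (τ × Bool)) u τ hne (by
    intro o
    match o with
    | none => exact ⟨0, fun s hs => ⟨by simpa using hpos s hs, by simp [u]⟩⟩
    | some (s, b) =>
      obtain ⟨m, hm⟩ := code_occ hα hl0 hl1 hF hT (crit α lam ((s : ℤ), b)) τ
      obtain ⟨m', hm'⟩ := late_finset hL τ m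
      refine ⟨m', fun t ht => ⟨(hm' t ht).1, ?_⟩⟩
      rw [(hm' t ht).2, hm t ht]) (by
    intro o o' hoo
    match o, o' with
    | none, none => exact absurd rfl hoo
    | none, some (s, b) => exact hcon _
    | some (s, b), none =>
      obtain ⟨t, ht, h⟩ := hcon (crit α lam ((s : ℤ), b))
      exact ⟨t, ht, h.symm⟩
    | some (s, b), some (s', b') =>
      apply crit_distinct hα hl0 hl1 hε1 hε2 hD hgood ((s : ℤ), b) ((s' : ℤ), b') s.2 s'.2
      intro h
      rw [Prod.mk.injEq] at h
      apply hoo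
      rw [Subtype.ext h.1, h.2])
  simp at hcard
  omega

theorem finset_gap (S : Finset ℤ) (P : ℤ → ℝ → Prop)
    (hmono : ∀ s δ δ', δ' ≤ δ → P s δ → P s δ') (h : ∀ s ∈ S, ∃ δ > 0, P s δ) :
    ∃ δ > 0, ∀ s ∈ S, P s δ := by
  induction S using Finset.induction_on with
  | empty => exact ⟨1, one_pos, by simp⟩
  | insert a t ha ih =>
    obtain ⟨δ, h0, h1⟩ := ih fun s hs => h s (Finset.mem_insert_of_mem hs)
    obtain ⟨δ', h0', h1'⟩ := h a (Finset.mem_insert_self _ _)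
    refine ⟨min δ δ', lt_min h0 h0', fun s hs => ?_⟩
    rcases Finset.mem_insert.1 hs with rfl | hs
    · exact hmono _ _ _ (min_le_right _ _) h1'
    · exact hmono _ _ _ (min_le_left _ _) (h1 s hs)

/-- non-recurrence -/
def NRec (X : ℤ → Bool) : Prop :=
  ∃ L : ℤ, ∀ M : ℤ, 1 ≤ M → ∃ i, 0 ≤ i ∧ i < L ∧ X (M + i) ≠ X i

theorem rec_right {X : ℤ → Bool} (hN : NRec X) {α lam β : ℝ} (hα : Irrational α) (hl0 : 0 < lam)
    (hl1 : lam < 1) (h : ∀ m : ℤ, 0 ≤ m → X m = code lam (β + m * α)) : False := by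
  obtain ⟨L, hL⟩ := hN
  obtain ⟨δ, hδ, hg⟩ := finset_gap (Finset.Ico 0 L) (fun s δ =>
    (Int.fract (β + s * α) < lam → Int.fract (β + s * α) + δ ≤ lam) ∧
      Int.fract (β + s * α) + δ ≤ 1)
    (fun s δ δ' hd hp => ⟨fun h => by linarith [hp.1 h], by linarith [hp.2]⟩) (fun s _ => by
      have := Int.fract_lt_one (β + s * α)
      by_cases hc : Int.fract (β + s * α) < lam
      · exact ⟨lam - Int.fract (β + s * α), by linarith, fun _ => by linarith, by linarith⟩
      · exact ⟨1 - Int.fract (β + s * α), by linarith, fun h => absurd h hc, by linarith⟩)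
  obtain ⟨N, -, hd⟩ := pos_dense hα 1 one_ne_zero δ hδ
  obtain ⟨M, hM, -, hMf⟩ := hd 0 1
  rw [zero_add, mul_one] at hMf
  obtain ⟨i, hi0, hiL, hi⟩ := hL M hM
  apply hi
  rw [h i hi0, h (M + i) (by omega)]
  have hfl := Int.floor_add_fract ((M : ℝ) * α)
  have hf0 := Int.fract_nonneg ((M : ℝ) * α)
  set e := Int.fract ((M : ℝ) * α)
  obtain ⟨g1, g2⟩ := hg i (Finset.mem_Ico.2 ⟨hi0, hiL⟩)
  have hfl2 := Int.floor_add_fract (β + i * α)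
  have hf2 := Int.fract_nonneg (β + i * α)
  set f := Int.fract (β + i * α) with hf
  by_cases hc : f < lam
  · rw [code_false (r := β + i * α) hl1 ⌊β + i * α⌋ (y := f) (by linarith) hf2 hc,
      code_false (r := β + (M + i : ℤ) * α) hl1 (⌊β + i * α⌋ + ⌊(M : ℝ) * α⌋) (y := f + e) (by push_cast; linarith)
        (by linarith) (by linarith [g1 hc])]
  · rw [code_true (r := β + i * α) hl0 ⌊β + i * α⌋ (y := f) (by linarith) (by linarith) (by linarith),
      code_true (r := β + (M + i : ℤ) * α) hl0 (⌊β + i * α⌋ + ⌊(M : ℝ) * α⌋) (y := f + e) (by push_cast; linarith)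
        (by linarith) (by linarith)]

/-- left-continuous coding -/
noncomputable def codeL (lam r : ℝ) : Bool := decide (Int.fract r = 0 ∨ lam < Int.fract r)

theorem rec_left {X : ℤ → Bool} (hN : NRec X) {α lam β : ℝ} (hα : Irrational α) (hl0 : 0 < lam)
    (hl1 : lam < 1) (h : ∀ m : ℤ, 0 ≤ m → X m = codeL lam (β + m * α)) : False := by
  obtain ⟨L, hL⟩ := hN
  obtain ⟨δ, hδ, hg⟩ := finset_gap (Finset.Ico 0 L) (fun s δ => δ < 1 - lam ∧
    (lam < Int.fract (β + s * α) → δ ≤ Int.fract (β + s * α) - lam) ∧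
      (0 < Int.fract (β + s * α) → δ ≤ Int.fract (β + s * α)))
    (fun s δ δ' hd hp => ⟨by linarith [hp.1], fun h => by linarith [hp.2.1 h],
      fun h => by linarith [hp.2.2 h]⟩) (fun s _ => by
      have h0 := Int.fract_nonneg (β + s * α)
      have h1 := Int.fract_lt_one (β + s * α)
      set f := Int.fract (β + s * α)
      by_cases hc : lam < f
      · exact ⟨min (f - lam) ((1 - lam) / 2), lt_min (by linarith) (by linarith),
          lt_of_le_of_lt (min_le_right _ _) (by linarith), fun _ => min_le_left _ _,
          fun _ => (min_le_left _ _).trans (by linarith)⟩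
      · rcases h0.lt_or_eq with h0 | h0
        · exact ⟨min f ((1 - lam) / 2), lt_min (by linarith) (by linarith),
            lt_of_le_of_lt (min_le_right _ _) (by linarith), fun h => absurd h hc,
            fun _ => (min_le_left _ _)⟩
        · exact ⟨(1 - lam) / 2, by linarith, by linarith, fun h => absurd h hc,
            fun h => absurd h (by linarith)⟩)
  by_cases hL0 : L ≤ 0
  · obtain ⟨i, h1, h2, -⟩ := hL 1 le_rfl
    omega
  obtain ⟨N, -, hd⟩ := pos_dense hα 1 one_ne_zero (δ / 2) (by linarith)
  obtain ⟨M, hM, -, hMf⟩ := hd (δ / 2) 1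
  rw [mul_one] at hMf
  obtain ⟨i, hi0, hiL, hi⟩ := hL M hM
  apply hi
  rw [h i hi0, h (M + i) (by omega)]
  have hfl := Int.floor_add_fract (δ / 2 + (M : ℝ) * α)
  have hf0 := Int.fract_nonneg (δ / 2 + (M : ℝ) * α)
  set e' := Int.fract (δ / 2 + (M : ℝ) * α)
  obtain ⟨e, he⟩ : ∃ e, e = δ / 2 - e' := ⟨_, rfl⟩
  have he0 : 0 < e := by linarith
  have he1 : e ≤ δ / 2 := by linarith
  obtain ⟨g0, g1, g2⟩ := hg i (Finset.mem_Ico.2 ⟨hi0, hiL⟩)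
  have hfl2 := Int.floor_add_fract (β + i * α)
  have hf2 := Int.fract_nonneg (β + i * α)
  have hf3 := Int.fract_lt_one (β + i * α)
  set f := Int.fract (β + i * α) with hf
  have hpre : ∀ k : ℤ, 0 ≤ f - e + k → f - e + k < 1 →
      Int.fract (β + (M + i : ℤ) * α) = f - e + k := by
    intro k h0 h1
    rw [show β + (M + i : ℤ) * α = f - e + k + (⌊δ / 2 + (M : ℝ) * α⌋ + ⌊β + i * α⌋ - k : ℤ) by
      push_cast; linarith, Int.fract_add_intCast, Int.fract_eq_self.2 ⟨h0, h1⟩]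
  rcases hf2.lt_or_eq with h0 | h0
  · by_cases hc : lam < f
    · have h1 := g1 hc
      have h2 := hpre 0 (by push_cast; linarith) (by push_cast; linarith)
      have h3 : lam < f - e + (0 : ℤ) := by push_cast; linarith
      simp only [codeL, h2, ← hf, hc, h3, or_true]
    · have h1 := g2 h0
      have h2 := hpre 0 (by push_cast; linarith) (by push_cast; linarith)
      have h3 : ¬ lam < f - e + (0 : ℤ) := by push_cast; linarith
      have h4 : ¬ f - e + (0 : ℤ) = 0 := by push_cast; linarith
      have h5 : ¬ f = 0 := by linarith
      simp only [codeL, h2, ← hf, hc, h3, h4, h5]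
  · have h2 := hpre 1 (by push_cast; linarith) (by push_cast; linarith)
    have h3 : lam < f - e + (1 : ℤ) := by push_cast; linarith
    have h5 : f = 0 := h0.symm
    simp only [codeL, h2, ← hf, h3, or_true]
    simp [h5]


theorem image_dense {α : ℝ} {K N : ℤ} {ε : ℝ}
    (hN : ∀ (y : ℝ) (a : ℤ), ∃ j : ℤ, a ≤ j ∧ j ≤ a + N ∧
      Int.fract (y + (j * (2 * K) : ℤ) * α) < ε) (a b : ℤ) (hb : a + N ≤ b) :
    DenseT α ((Finset.Icc a b).image fun j => j * (2 * K)) ε := by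
  intro y
  obtain ⟨j, h1, h2, h3⟩ := hN y a
  exact ⟨j * (2 * K), Finset.mem_image.2 ⟨j, Finset.mem_Icc.2 ⟨h1, by omega⟩, rfl⟩, h3⟩

theorem two_mul_ne {K j j' : ℤ} (hK : 0 < K) : j * (2 * K) - j' * (2 * K) ≠ K := by
  intro h
  have h1 : K * (2 * (j - j')) = K * 1 := by linarith
  have h2 := mul_left_cancel₀ hK.ne' h1
  omega

theorem extend_pattern {X zs : ℤ → Bool} (hX : XBd X) (hL : LateOcc X zs) {α lam κ ε : ℝ}
    (hα : Irrational α) (hl0 : 0 < lam) (hl1 : lam < 1)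
    (hF : ∀ d : ℤ, 0 < Int.fract (κ + d * α) → Int.fract (κ + d * α) < lam → zs d = false)
    (hT : ∀ d : ℤ, lam < Int.fract (κ + d * α) → zs d = true)
    (hε : 0 < ε) (hε1 : ε ≤ lam) (hε2 : ε ≤ 1 - lam) {K : ℤ} (hK : 0 < K)
    (hbad : ∀ s s' k : ℤ, ((s : ℝ) - s') * α - lam = k → s - s' = K ∨ s' - s = K)
    (m : ℤ) (hm : 0 ≤ m) : ∃ N1 : ℤ, ∀ N, N1 ≤ N → ∀ p : ℝ,
      (∀ j : ℤ, 0 ≤ j → j ≤ N → X (j * (2 * K)) = code lam (p + (j * (2 * K) : ℤ) * α)) →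
      ∃ p' : ℝ, X m = code lam (p' + m * α) ∧
        (Int.fract (p' - p) < ε ∨ 1 - ε < Int.fract (p' - p)) := by
  obtain ⟨N0, hN0, hd⟩ := pos_dense hα (2 * K) (by omega) ε hε
  refine ⟨m + K + 1 + N0, fun N hN p hp => ?_⟩
  set C := (Finset.Icc (m + K + 1) (m + K + 1 + N0)).image fun j => j * (2 * K) with hC
  have hCD : DenseT α C ε := image_dense hd _ _ le_rfl
  have hCm : ∀ s ∈ C, ∃ j, m + K + 1 ≤ j ∧ j ≤ m + K + 1 + N0 ∧ s = j * (2 * K) := by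
    intro s hs
    obtain ⟨j, hj, rfl⟩ := Finset.mem_image.1 hs
    exact ⟨j, (Finset.mem_Icc.1 hj).1, (Finset.mem_Icc.1 hj).2, rfl⟩
  have hbig : ∀ s ∈ C, m + K < s := by
    intro s hs
    obtain ⟨j, h1, h2, rfl⟩ := hCm s hs
    nlinarith
  obtain ⟨p', hp'⟩ := match_pattern hX hL hα hl0 hl1 hF hT hε1 hε2 (τ := insert m C)
    (by
      intro y
      obtain ⟨s, hs, h⟩ := hCD y
      exact ⟨s, Finset.mem_insert_of_mem hs, h⟩)
    (by
      intro s hs s' hs' k hk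
      have hcase := hbad s s' k hk
      rcases Finset.mem_insert.1 hs with rfl | hs
      · rcases Finset.mem_insert.1 hs' with rfl | hs'
        · omega
        · have := hbig _ hs'
          omega
      · rcases Finset.mem_insert.1 hs' with rfl | hs'
        · have := hbig _ hs
          omega
        · obtain ⟨j, -, -, rfl⟩ := hCm s hs
          obtain ⟨j', -, -, rfl⟩ := hCm s' hs'
          rcases hcase with h | h
          · exact two_mul_ne hK h
          · exact two_mul_ne hK h)
    (by
      intro s hs
      rcases Finset.mem_insert.1 hs with rfl | hs
      · exact hm
      · have := hbig _ hs
        omega)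
  refine ⟨p', hp' m (Finset.mem_insert_self _ _), ?_⟩
  apply code_sep hl0 hl1 hε1 hε2 hCD
  intro s hs
  rw [← hp' s (Finset.mem_insert_of_mem hs)]
  obtain ⟨j, h1, h2, rfl⟩ := hCm s hs
  exact (hp j (by omega) (by omega)).symm

theorem code_fract (lam p r : ℝ) : code lam (Int.fract p + r) = code lam (p + r) := by
  have : p + r = Int.fract p + r + (⌊p⌋ : ℤ) := by
    have := Int.floor_add_fract p
    linarith
  rw [code, code, this, Int.fract_add_intCast]

theorem beta_exists {X zs : ℤ → Bool} (hX : XBd X) (hL : LateOcc X zs) {α lam κ : ℝ}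
    (hα : Irrational α) (hl0 : 0 < lam) (hl1 : lam < 1)
    (hF : ∀ d : ℤ, 0 < Int.fract (κ + d * α) → Int.fract (κ + d * α) < lam → zs d = false)
    (hT : ∀ d : ℤ, lam < Int.fract (κ + d * α) → zs d = true) :
    ∃ β : ℝ, ∀ m : ℤ, 0 ≤ m → Int.fract (β + m * α) ≠ 0 → Int.fract (β + m * α) ≠ lam →
      X m = code lam (β + m * α) := by
  obtain ⟨K, hK, hbad⟩ := exists_bad_diff hα hl0 hl1
  obtain ⟨ε0, hε0, hε1, hε2⟩ : ∃ ε0 : ℝ, 0 < ε0 ∧ ε0 ≤ lam ∧ ε0 ≤ 1 - lam :=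
    ⟨min lam (1 - lam), lt_min hl0 (by linarith), min_le_left _ _, min_le_right _ _⟩
  have hex : ∀ n : ℕ, ∃ p : ℝ, p ∈ Set.Icc (0 : ℝ) 1 ∧ ∀ j : ℤ, 0 ≤ j → j ≤ n →
      X (j * (2 * K)) = code lam (p + (j * (2 * K) : ℤ) * α) := by
    intro n
    obtain ⟨N0, hN0, hd⟩ := pos_dense hα (2 * K) (by omega) ε0 hε0
    obtain ⟨p, hp⟩ := match_pattern hX hL hα hl0 hl1 hF hT hε1 hε2
      (τ := (Finset.Icc 0 (n + N0)).image fun j => j * (2 * K))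
      (image_dense hd _ _ (by omega))
      (by
        intro s hs s' hs' k hk
        obtain ⟨j, -, rfl⟩ := Finset.mem_image.1 hs
        obtain ⟨j', -, rfl⟩ := Finset.mem_image.1 hs'
        rcases hbad _ _ k hk with h | h
        · exact two_mul_ne hK h
        · exact two_mul_ne hK h)
      (by
        intro s hs
        obtain ⟨j, hj, rfl⟩ := Finset.mem_image.1 hs
        have := (Finset.mem_Icc.1 hj).1
        positivity)
    refine ⟨Int.fract p, ⟨Int.fract_nonneg _, (Int.fract_lt_one _).le⟩, fun j h0 h1 => ?_⟩
    rw [code_fract]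
    exact hp _ (Finset.mem_image.2 ⟨j, Finset.mem_Icc.2 ⟨h0, by omega⟩, rfl⟩)
  choose P hP1 hP2 using hex
  obtain ⟨β, -, φ, hφ, hlim⟩ := isCompact_Icc.tendsto_subseq hP1
  refine ⟨β, fun m hm hf0 hfl => ?_⟩
  have hfl2 := Int.floor_add_fract (β + m * α)
  have hf1 := Int.fract_nonneg (β + m * α)
  have hf2 := Int.fract_lt_one (β + m * α)
  set f := Int.fract (β + m * α) with hf
  have hf3 : 0 < f := lt_of_le_of_ne hf1 (Ne.symm hf0)
  have hf4 : 0 < |f - lam| := abs_pos.2 (sub_ne_zero.2 hfl)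
  obtain ⟨ε, hε, e1, e2, e3, e4, e5⟩ : ∃ ε : ℝ, 0 < ε ∧ ε ≤ lam ∧ ε ≤ 1 - lam ∧ 2 * ε ≤ f ∧
      2 * ε ≤ 1 - f ∧ 2 * ε ≤ |f - lam| := by
    refine ⟨min ε0 (min (f / 2) (min ((1 - f) / 2) (|f - lam| / 2))), ?_, ?_⟩
    · refine lt_min hε0 (lt_min (by linarith) (lt_min (by linarith) (by linarith)))
    · have h1 := min_le_left ε0 (min (f / 2) (min ((1 - f) / 2) (|f - lam| / 2)))
      have h2 := min_le_right ε0 (min (f / 2) (min ((1 - f) / 2) (|f - lam| / 2)))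
      have h3 := min_le_left (f / 2) (min ((1 - f) / 2) (|f - lam| / 2))
      have h4 := min_le_right (f / 2) (min ((1 - f) / 2) (|f - lam| / 2))
      have h5 := min_le_left ((1 - f) / 2) (|f - lam| / 2)
      have h6 := min_le_right ((1 - f) / 2) (|f - lam| / 2)
      refine ⟨?_, ?_, ?_, ?_, ?_⟩ <;> linarith
  obtain ⟨N1, hN1⟩ := extend_pattern hX hL hα hl0 hl1 hF hT hε e1 e2 hK hbad m hm
  rw [Metric.tendsto_atTop] at hlim
  obtain ⟨n0, hn0⟩ := hlim ε hε
  obtain ⟨n, hn⟩ : ∃ n : ℕ, n0 ≤ n ∧ N1.toNat ≤ n :=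
    ⟨max n0 N1.toNat, le_max_left _ _, le_max_right _ _⟩
  have hd := hn0 n hn.1
  rw [Real.dist_eq, Function.comp] at hd
  have hφn := hφ.id_le n
  simp only [id] at hφn
  obtain ⟨p', hp1, hp2⟩ := hN1 (φ n) (by omega) (P (φ n)) (hP2 (φ n))
  rw [hp1]
  have hfl3 := Int.floor_add_fract (p' - P (φ n))
  have hf5 := Int.fract_nonneg (p' - P (φ n))
  have hf6 := Int.fract_lt_one (p' - P (φ n))
  set g := Int.fract (p' - P (φ n))
  have habs := abs_lt.1 hd
  obtain ⟨k, e, hke, hea, heb⟩ : ∃ (k : ℤ) (e : ℝ), p' + m * α = f + e + k ∧ -(2 * ε) < e ∧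
      e < 2 * ε := by
    rcases hp2 with h | h
    · exact ⟨⌊p' - P (φ n)⌋ + ⌊β + m * α⌋, g + (P (φ n) - β), by push_cast; linarith,
        by linarith, by linarith⟩
    · exact ⟨⌊p' - P (φ n)⌋ + 1 + ⌊β + m * α⌋, g - 1 + (P (φ n) - β), by push_cast; linarith,
        by linarith, by linarith⟩
  rcases lt_or_gt_of_ne hfl with h | h
  · rw [abs_of_neg (by linarith)] at e5
    rw [code_false (r := p' + m * α) hl1 k hke (by linarith) (by linarith),
      code_false (r := β + m * α) hl1 ⌊β + m * α⌋ (y := f) (by linarith) (by linarith) h]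
  · rw [abs_of_pos (by linarith)] at e5
    rw [code_true (r := p' + m * α) hl0 k hke (by linarith) (by linarith),
      code_true (r := β + m * α) hl0 ⌊β + m * α⌋ (y := f) (by linarith) (by linarith) hf2]

theorem case_one {X z : ℤ → Bool} (hX : XBd X) (hL : LateOcc X z) (hUR : URd z) (hNC : NoConst z)
    (hNR : NRec X) : ∃ α : ℝ, Irrational α ∧ ∃ k₁ k₂ : ℕ, k₁ ≠ k₂ ∧ ∃ a b : ℝ,
      (∃ j : ℤ, a = k₁ * α + j) ∧ (∃ j : ℤ, b = k₂ * α + j) ∧ a < b ∧ b - a ≤ 1 ∧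
      ((∀ n : ℕ, X n = true ↔ ∃ k : ℤ, n * α + k ∈ Set.Ioo a b) ∨
       (∀ n : ℕ, X n = true ↔ ∃ k : ℤ, n * α + k ∈ Set.Icc a b)) := by
  obtain ⟨α, lam, κ, zs, hα, hl0, hl1, hocc, hF, hT⟩ := rot hUR hNC (pbd_of_xbd hX hL)
  obtain ⟨β, hβ⟩ := beta_exists hX (late_trans hL hocc) hα hl0 hl1 hF hT
  have h1 : ∃ m : ℤ, 0 ≤ m ∧ X m ≠ code lam (β + m * α) := by
    by_contra hcon
    push Not at hcon
    exact rec_right hNR hα hl0 hl1 hcon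
  have h2 : ∃ m : ℤ, 0 ≤ m ∧ X m ≠ codeL lam (β + m * α) := by
    by_contra hcon
    push Not at hcon
    exact rec_left hNR hα hl0 hl1 hcon
  have hu : ∀ (c : ℝ) (m m' : ℤ), Int.fract (β + m * α) = c → Int.fract (β + m' * α) = c →
      m = m' := by
    intro c m m' h h'
    have e1 := Int.floor_add_fract (β + m * α)
    have e2 := Int.floor_add_fract (β + m' * α)
    exact irr_unique hα (κ := β - c) (k := ⌊β + m * α⌋) (k' := ⌊β + m' * α⌋) (by linarith)
      (by linarith)
  have c1 : ∃ m : ℤ, 0 ≤ m ∧ ((Int.fract (β + m * α) = 0 ∧ X m = true) ∨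
      (Int.fract (β + m * α) = lam ∧ X m = false)) := by
    obtain ⟨m, hm, h⟩ := h1
    refine ⟨m, hm, ?_⟩
    by_cases e1 : Int.fract (β + m * α) = 0
    · left
      simp only [code, e1, not_le.2 hl0] at h
      exact ⟨e1, by simpa using h⟩
    · by_cases e2 : Int.fract (β + m * α) = lam
      · right
        simp only [code, e2, le_refl] at h
        exact ⟨e2, by simpa using h⟩
      · exact absurd (hβ m hm e1 e2) h
  have c2 : ∃ m : ℤ, 0 ≤ m ∧ ((Int.fract (β + m * α) = 0 ∧ X m = false) ∨
      (Int.fract (β + m * α) = lam ∧ X m = true)) := by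
    obtain ⟨m, hm, h⟩ := h2
    refine ⟨m, hm, ?_⟩
    by_cases e1 : Int.fract (β + m * α) = 0
    · left
      simp only [codeL, e1, true_or] at h
      exact ⟨e1, by simpa using h⟩
    · by_cases e2 : Int.fract (β + m * α) = lam
      · right
        simp only [codeL, e2, lt_irrefl, hl0.ne', or_false] at h
        exact ⟨e2, by simpa using h⟩
      · refine absurd ?_ h
        rw [hβ m hm e1 e2]
        simp only [code, codeL, e1, false_or, decide_eq_decide]
        exact ⟨fun h => lt_of_le_of_ne h (Ne.symm e2), le_of_lt⟩
  have key : ∀ m0 ml : ℤ, 0 ≤ m0 → 0 ≤ ml → Int.fract (β + m0 * α) = 0 →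
      Int.fract (β + ml * α) = lam →
      ((∀ n : ℕ, X n = true ↔ ∃ k : ℤ, n * α + k ∈ Set.Ioo (lam - β) (1 - β)) ∨
       (∀ n : ℕ, X n = true ↔ ∃ k : ℤ, n * α + k ∈ Set.Icc (lam - β) (1 - β))) →
      ∃ α : ℝ, Irrational α ∧ ∃ k₁ k₂ : ℕ, k₁ ≠ k₂ ∧ ∃ a b : ℝ,
      (∃ j : ℤ, a = k₁ * α + j) ∧ (∃ j : ℤ, b = k₂ * α + j) ∧ a < b ∧ b - a ≤ 1 ∧
      ((∀ n : ℕ, X n = true ↔ ∃ k : ℤ, n * α + k ∈ Set.Ioo a b) ∨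
       (∀ n : ℕ, X n = true ↔ ∃ k : ℤ, n * α + k ∈ Set.Icc a b)) := by
    intro m0 ml hm0 hml h0 hl h
    have e1 := Int.floor_add_fract (β + m0 * α)
    have e2 := Int.floor_add_fract (β + ml * α)
    rw [h0] at e1
    rw [hl] at e2
    lift m0 to ℕ using hm0
    lift ml to ℕ using hml
    push_cast at e1 e2 h0 hl
    refine ⟨α, hα, ml, m0, ?_, lam - β, 1 - β, ⟨-⌊β + ml * α⌋, by push_cast; linarith⟩,
      ⟨1 - ⌊β + m0 * α⌋, by push_cast; linarith⟩, by linarith, by linarith, h⟩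
    rintro rfl
    rw [h0] at hl
    linarith
  obtain ⟨m1, hm1, h1⟩ := c1
  obtain ⟨m2, hm2, h2⟩ := c2
  have offpt : ∀ n : ℕ, Int.fract (β + n * α) ≠ 0 → Int.fract (β + n * α) ≠ lam →
      (X n = true ↔ lam ≤ Int.fract (β + n * α)) := by
    intro n e1 e2
    have := hβ n (by positivity) (by simpa using e1) (by simpa using e2)
    rw [this]
    simp [code]
  rcases h1 with ⟨f1, x1⟩ | ⟨f1, x1⟩ <;> rcases h2 with ⟨f2, x2⟩ | ⟨f2, x2⟩
  · rw [hu 0 m1 m2 f1 f2, x2] at x1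
    cases x1
  · refine key m1 m2 hm1 hm2 f1 f2 (Or.inr fun n => ?_)
    have e1 := Int.floor_add_fract (β + n * α)
    have e2 := Int.fract_nonneg (β + n * α)
    have e3 := Int.fract_lt_one (β + n * α)
    by_cases g1 : Int.fract (β + n * α) = 0
    · have : (n : ℤ) = m1 := hu 0 _ _ (by simpa using g1) f1
      rw [this, x1]
      refine ⟨fun _ => ⟨1 - ⌊β + n * α⌋, ?_⟩, fun _ => rfl⟩
      push_cast
      constructor <;> linarith
    · by_cases g2 : Int.fract (β + n * α) = lam
      · have : (n : ℤ) = m2 := hu lam _ _ (by simpa using g2) f2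
        rw [this, x2]
        refine ⟨fun _ => ⟨- ⌊β + n * α⌋, ?_⟩, fun _ => rfl⟩
        push_cast
        constructor <;> linarith
      · rw [offpt n g1 g2]
        constructor
        · intro h
          refine ⟨- ⌊β + n * α⌋, ?_⟩
          push_cast
          constructor <;> linarith
        · rintro ⟨k, k1, k2⟩
          have q1 : (-1 : ℝ) < (⌊β + n * α⌋ + k : ℤ) := by push_cast; linarith
          have q2 : ((⌊β + n * α⌋ + k : ℤ) : ℝ) < 1 := by
            push_cast
            have := lt_of_le_of_ne e2 (Ne.symm g1)
            linarith
          have q3 : (-1 : ℤ) < (⌊β + n * α⌋ + k : ℤ) := by exact_mod_cast q1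
          have q4 : (⌊β + n * α⌋ + k : ℤ) < 1 := by exact_mod_cast q2
          have q5 : ((⌊β + n * α⌋ + k : ℤ) : ℝ) = 0 := by
            rw [show ⌊β + n * α⌋ + k = 0 by omega]; simp
          push_cast at q5
          linarith
  · refine key m2 m1 hm2 hm1 f2 f1 (Or.inl fun n => ?_)
    have e1 := Int.floor_add_fract (β + n * α)
    have e2 := Int.fract_nonneg (β + n * α)
    have e3 := Int.fract_lt_one (β + n * α)
    have ex : ∀ k : ℤ, n * α + k ∈ Set.Ioo (lam - β) (1 - β) → lam < Int.fract (β + n * α) := by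
      rintro k ⟨k1, k2⟩
      have q1 : (-1 : ℝ) < (⌊β + n * α⌋ + k : ℤ) := by push_cast; linarith
      have q2 : ((⌊β + n * α⌋ + k : ℤ) : ℝ) < 1 := by
        push_cast
        linarith
      have q3 : (-1 : ℤ) < (⌊β + n * α⌋ + k : ℤ) := by exact_mod_cast q1
      have q4 : (⌊β + n * α⌋ + k : ℤ) < 1 := by exact_mod_cast q2
      have q5 : ((⌊β + n * α⌋ + k : ℤ) : ℝ) = 0 := by
        rw [show ⌊β + n * α⌋ + k = 0 by omega]; simp
      push_cast at q5
      linarith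
    by_cases g1 : Int.fract (β + n * α) = 0
    · have : (n : ℤ) = m2 := hu 0 _ _ (by simpa using g1) f2
      rw [this, x2]
      refine ⟨fun h => Bool.noConfusion h, fun ⟨k, hk⟩ => ?_⟩
      have := ex k hk
      linarith
    · by_cases g2 : Int.fract (β + n * α) = lam
      · have : (n : ℤ) = m1 := hu lam _ _ (by simpa using g2) f1
        rw [this, x1]
        refine ⟨fun h => Bool.noConfusion h, fun ⟨k, hk⟩ => ?_⟩
        have := ex k hk
        linarith
      · rw [offpt n g1 g2]
        constructor
        · intro h
          have := lt_of_le_of_ne h (Ne.symm g2)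
          refine ⟨- ⌊β + n * α⌋, ?_⟩
          push_cast
          constructor <;> linarith
        · rintro ⟨k, hk⟩
          exact (ex k hk).le
  · rw [hu lam m1 m2 f1 f2, x2] at x1
    cases x1

/-! ### The Toeplitz-type case -/

/-- the class of `i` modulo `t` is periodic -/
def Per (z : ℤ → Bool) (t i : ℤ) : Prop :=
  ∃ g : ℤ, 0 < g ∧ t ∣ g ∧ ∀ q : ℤ, t ∣ q - i → z (q + g) = z q

/-- the class of `i` modulo `t` is constant -/
def Cst (z : ℤ → Bool) (t i : ℤ) : Prop := ∀ q : ℤ, t ∣ q - i → z q = z i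

theorem updown {z : ℤ → Bool} (hUR : URd z) {t k : ℤ} (hk : ¬ Per z t k) (g : ℤ) (hg : 0 < g)
    (ht : t ∣ g) (c : Bool) : ∃ q : ℤ, t ∣ q - k ∧ z q = c ∧ z (q + g) = !c := by
  obtain ⟨q, hq, hne⟩ : ∃ q : ℤ, t ∣ q - k ∧ z (q + g) ≠ z q := by
    by_contra hcon
    push Not at hcon
    exact hk ⟨g, hg, ht, hcon⟩
  by_cases hc : z q = c
  · refine ⟨q, hq, hc, ?_⟩
    subst hc
    revert hne
    cases z q <;> cases z (q + g) <;> simp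
  · have hc1 : z q = !c := by
      revert hc
      cases z q <;> cases c <;> simp
    have hc2 : z (q + g) = c := by
      rw [hc1] at hne
      revert hne
      cases z (q + g) <;> cases c <;> simp
    obtain ⟨G, hG, hr⟩ := hUR g hg |q|
    obtain ⟨g', h1, h2, ⟨w, hw⟩, h4⟩ := hr g
    have hz := h4 q le_rfl
    rw [hc1] at hz
    have hw1 : 1 ≤ w := by
      by_contra hcon
      have : w ≤ 0 := by omega
      nlinarith
    obtain ⟨j, hj1, hj2⟩ := first_change (T := g) (q + g) c hc2 ⟨(w - 1).toNat, by
      rw [show q + g + ((w - 1).toNat : ℤ) * g = q + g' by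
        rw [Int.toNat_of_nonneg (by omega), hw]; ring]
      exact hz⟩
    refine ⟨q + g + j * g, ?_, hj1 j le_rfl, ?_⟩
    · have : q + g + j * g - k = (q - k) + (1 + j) * g := by ring
      rw [this]
      exact dvd_add hq (ht.mul_left _)
    · rw [← hj2]
      congr 1
      push_cast
      ring

/-- constancy type modulo `Q` -/
noncomputable def ctype (z : ℤ → Bool) (Q i : ℤ) : Option Bool :=
  open Classical in if Cst z Q i then some (z i) else none

theorem ctype_some {z : ℤ → Bool} {Q i : ℤ} (h : Cst z Q i) : ctype z Q i = some (z i) := by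
  simp [ctype, h]

theorem cst_of_ctype {z : ℤ → Bool} {Q i : ℤ} {b : Bool} (h : ctype z Q i = some b) :
    Cst z Q i ∧ z i = b := by
  unfold ctype at h
  split_ifs at h with h1
  exact ⟨h1, by simpa using h⟩

theorem not_cst_of_ctype {z : ℤ → Bool} {Q i : ℤ} (h : ctype z Q i = none) : ¬ Cst z Q i := by
  intro h1
  rw [ctype_some h1] at h
  cases h

theorem ctype_none {z : ℤ → Bool} {Q i : ℤ} (h : ¬ Cst z Q i) : ctype z Q i = none := by
  simp [ctype, h]

theorem cst_congr {z : ℤ → Bool} {Q i i' : ℤ} (h : Q ∣ i' - i) (hc : Cst z Q i) :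
    Cst z Q i' ∧ z i' = z i := by
  have h1 := hc i' h
  refine ⟨fun q hq => ?_, h1⟩
  rw [h1]
  apply hc
  have : q - i = (q - i') + (i' - i) := by ring
  rw [this]
  exact dvd_add hq h

theorem ctype_congr {z : ℤ → Bool} {Q i i' : ℤ} (h : Q ∣ i' - i) : ctype z Q i' = ctype z Q i := by
  by_cases hc : Cst z Q i
  · obtain ⟨h1, h2⟩ := cst_congr h hc
    rw [ctype_some h1, ctype_some hc, h2]
  · rw [ctype_none hc, ctype_none]
    intro hc'
    exact hc (cst_congr (by rw [← neg_sub]; exact (dvd_neg.2 h)) hc').1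

theorem exists_clock {z : ℤ → Bool} (hUR : URd z) (Q : ℤ) (hQ : 0 < Q) :
    ∃ t : ℤ, 0 < t ∧ t ∣ Q ∧ (∀ i k : ℤ, ctype z Q (i + k * t) = ctype z Q i) ∧
      ∃ R : ℤ, 0 < R ∧ ∀ m m' : ℤ, (∀ s, 0 ≤ s → s < R → z (m + s) = z (m' + s)) →
        t ∣ m - m' := by
  let H : AddSubgroup ℤ :=
    { carrier := {d | ∀ i, ctype z Q (i + d) = ctype z Q i}
      zero_mem' := fun i => by simp
      add_mem' := fun {a b} ha hb i => by
        rw [← add_assoc, hb, ha]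
      neg_mem' := fun {a} ha i => by
        have := ha (i + -a)
        rw [← this]
        congr 1
        ring }
  have hHQ : Q ∈ H := fun i => ctype_congr (by simp)
  obtain ⟨a, ha⟩ := Int.subgroup_cyclic H
  rw [← AddSubgroup.zmultiples_eq_closure] at ha
  have hmem : ∀ d, d ∈ H ↔ a ∣ d := fun d => by rw [ha, Int.mem_zmultiples_iff]
  have haQ : a ∣ Q := (hmem Q).1 hHQ
  have ha0 : a ≠ 0 := by
    rintro rfl
    have := zero_dvd_iff.1 haQ
    omega
  refine ⟨|a|, abs_pos.2 ha0, (abs_dvd _ _).2 haQ, fun i k => ?_, ?_⟩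
  · exact (hmem _).2 (((dvd_abs _ _).2 dvd_rfl).mul_left k) i
  · obtain ⟨K, hK, hocc⟩ := occ_uniform hUR Q hQ
    refine ⟨Q * K, by positivity, fun m m' h => ?_⟩
    rw [abs_dvd, ← hmem]
    have hone : ∀ (m m' : ℤ), (∀ s, 0 ≤ s → s < Q * K → z (m + s) = z (m' + s)) →
        ∀ i, 0 ≤ i → i < Q → Cst z Q (m + i) → Cst z Q (m' + i) ∧ z (m' + i) = z (m + i) := by
      intro m m' h i hi0 hi1 hc
      have hval : ∀ k, 0 ≤ k → k < K → z (m' + i + k * Q) = z (m + i) := by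
        intro k hk0 hk1
        have := h (i + k * Q) (by positivity) (by nlinarith)
        rw [add_assoc, ← this, ← add_assoc]
        exact hc _ (by simp)
      have h0 : z (m' + i) = z (m + i) := by simpa using hval 0 le_rfl hK
      refine ⟨fun q hq => ?_, h0⟩
      obtain ⟨k, hk0, hk1, hk⟩ := hocc (m' + i) q (by rw [← neg_sub]; exact dvd_neg.2 hq)
      rw [← hk, hval k hk0 hk1, h0]
    have hty : ∀ i, 0 ≤ i → i < Q → ctype z Q (m + i) = ctype z Q (m' + i) := by
      intro i hi0 hi1
      by_cases hc : Cst z Q (m + i)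
      · obtain ⟨h1, h2⟩ := hone m m' h i hi0 hi1 hc
        rw [ctype_some hc, ctype_some h1, h2]
      · rw [ctype_none hc, ctype_none]
        intro hc'
        exact hc (hone m' m (fun s h0 h1 => (h s h0 h1).symm) i hi0 hi1 hc').1
    intro i
    have e1 : ctype z Q (i + (m - m')) = ctype z Q (m + (i - m') % Q) := ctype_congr (by
      have : i + (m - m') - (m + (i - m') % Q) = (i - m') - (i - m') % Q := by ring
      rw [this]
      exact Int.dvd_self_sub_emod)
    have e2 : ctype z Q i = ctype z Q (m' + (i - m') % Q) := ctype_congr (by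
      have : i - (m' + (i - m') % Q) = (i - m') - (i - m') % Q := by ring
      rw [this]
      exact Int.dvd_self_sub_emod)
    rw [e1, e2]
    exact hty _ (Int.emod_nonneg _ (by omega)) (Int.emod_lt_of_pos _ hQ)

theorem build_classes {z : ℤ → Bool} (hUR : URd z) {t : ℤ} (ht : 0 < t) (κ : Bool → ℤ)
    (hκ : ∀ b, ¬ Per z t (κ b)) (n : ℕ) : ∃ τ : Finset ℤ, 0 ∈ τ ∧ τ.card ≤ n + 1 ∧
      ∃ S : Bool → Finset ℤ, ∀ b, 2 * (n + 1) ≤ (S b).card ∧ (∀ a ∈ S b, t ∣ a - κ b) ∧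
        ∀ a ∈ S b, ∀ a' ∈ S b, a ≠ a' → ∃ s ∈ τ, z (a + s) ≠ z (a' + s) := by
  classical
  induction n with
  | zero =>
    choose q hq1 hq2 hq3 using fun b => updown hUR (hκ b) t ht dvd_rfl
    refine ⟨{0}, by simp, by simp, fun b => {q b true, q b false}, fun b => ⟨?_, ?_, ?_⟩⟩
    · rw [Finset.card_pair]
      intro h
      have h1 := hq2 b true
      rw [h, hq2 b false] at h1
      cases h1
    · intro a ha
      rcases Finset.mem_insert.1 ha with rfl | ha
      · exact hq1 _ _
      · rw [Finset.mem_singleton.1 ha]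
        exact hq1 _ _
    · intro a ha a' ha' hne
      refine ⟨0, by simp, ?_⟩
      rw [add_zero, add_zero]
      simp only [Finset.mem_insert, Finset.mem_singleton] at ha ha'
      rcases ha with rfl | rfl <;> rcases ha' with rfl | rfl <;>
        first | exact absurd rfl hne | (rw [hq2, hq2]; decide)
  | succ n ih =>
    obtain ⟨τ, h0, hτ, S, hS⟩ := ih
    set R : ℤ := ∑ b : Bool, ∑ a ∈ S b, |a| with hR
    have hRb : ∀ b, ∀ a ∈ S b, |a| ≤ R := by
      intro b a ha
      refine le_trans ?_ (Finset.single_le_sum (f := fun b => ∑ a ∈ S b, |a|)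
        (fun j _ => Finset.sum_nonneg fun _ _ => abs_nonneg _) (Finset.mem_univ b))
      exact Finset.single_le_sum (f := fun a => |a|) (fun _ _ => abs_nonneg _) ha
    obtain ⟨G, -, hr⟩ := hUR t ht R
    obtain ⟨g, hg1, -, hgt, hg⟩ := hr 1
    choose q hq1 hq2 hq3 using fun b => updown hUR (hκ b) g (by omega) hgt
    have hnew : ∀ b c, ∀ a ∈ S b, ∃ s ∈ insert g τ, z (q b c + s) ≠ z (a + s) := by
      intro b c a ha
      by_contra hcon
      push Not at hcon
      have e1 := hcon 0 (Finset.mem_insert_of_mem h0)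
      have e2 := hcon g (Finset.mem_insert_self _ _)
      rw [add_zero, add_zero, hq2] at e1
      rw [hq3, hg a (hRb b a ha), ← e1] at e2
      cases c <;> cases e2
    have hnot : ∀ b c, q b c ∉ S b := by
      intro b c h
      obtain ⟨s, -, hs⟩ := hnew b c _ h
      exact hs rfl
    have hqq : ∀ b, q b true ≠ q b false := by
      intro b h
      have h1 := hq2 b true
      rw [h, hq2 b false] at h1
      cases h1
    refine ⟨insert g τ, Finset.mem_insert_of_mem h0, (Finset.card_insert_le _ _).trans (by omega),
      fun b => insert (q b true) (insert (q b false) (S b)), fun b => ⟨?_, ?_, ?_⟩⟩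
    · rw [Finset.card_insert_of_notMem, Finset.card_insert_of_notMem (hnot b false)]
      · have := (hS b).1
        omega
      · rw [Finset.mem_insert, not_or]
        exact ⟨hqq b, hnot b true⟩
    · intro a ha
      simp only [Finset.mem_insert] at ha
      rcases ha with rfl | rfl | ha
      · exact hq1 _ _
      · exact hq1 _ _
      · exact (hS b).2.1 a ha
    · intro a ha a' ha' hne
      have hz : ∃ s ∈ insert g τ, z (q b true + s) ≠ z (q b false + s) :=
        ⟨0, Finset.mem_insert_of_mem h0, by rw [add_zero, add_zero, hq2, hq2]; decide⟩
      simp only [Finset.mem_insert] at ha ha'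
      rcases ha with rfl | rfl | ha <;> rcases ha' with rfl | rfl | ha'
      · exact absurd rfl hne
      · exact hz
      · exact hnew _ _ _ ha'
      · obtain ⟨s, hs, h⟩ := hz
        exact ⟨s, hs, h.symm⟩
      · exact absurd rfl hne
      · exact hnew _ _ _ ha'
      · obtain ⟨s, hs, h⟩ := hnew b true _ ha
        exact ⟨s, hs, h.symm⟩
      · obtain ⟨s, hs, h⟩ := hnew b false _ ha
        exact ⟨s, hs, h.symm⟩
      · obtain ⟨s, hs, h⟩ := (hS b).2.2 a ha a' ha' hne
        exact ⟨s, Finset.mem_insert_of_mem hs, h⟩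

theorem one_hole {z : ℤ → Bool} (hUR : URd z) (hPB : PBd z) {t : ℤ} (ht : 0 < t)
    {R : ℤ} (hR : 0 < R) (hclock : ∀ m m' : ℤ,
      (∀ s, 0 ≤ s → s < R → z (m + s) = z (m' + s)) → t ∣ m - m')
    {k k' : ℤ} (hk : ¬ Per z t k) (hk' : ¬ Per z t k') : t ∣ k - k' := by
  classical
  by_contra hcon
  obtain ⟨τ, h0, hτ, S, hS⟩ := build_classes hUR ht (fun b => if b then k else k')
    (fun b => by cases b <;> simpa) R.toNat
  have hdiff : ∀ a ∈ S true, ∀ a' ∈ S false, ¬ t ∣ a - a' := by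
    intro a ha a' ha' hd
    have h1 := (hS true).2.1 a ha
    have h2 := (hS false).2.1 a' ha'
    simp only [if_true, Bool.false_eq_true, if_false] at h1 h2
    apply hcon
    have : k - k' = (a - a') - (a - k) + (a' - k') := by ring
    rw [this]
    exact dvd_add (dvd_sub hd h1) h2
  have hsep : ∀ a ∈ S true, ∀ a' ∈ S false,
      ∃ s ∈ τ ∪ Finset.Ico 0 R, z (a + s) ≠ z (a' + s) := by
    intro a ha a' ha'
    by_contra hc
    push Not at hc
    exact hdiff a ha a' ha' (hclock a a' fun s h1 h2 =>
      hc s (Finset.mem_union_right _ (Finset.mem_Ico.2 ⟨h1, h2⟩)))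
  have hdisj : Disjoint (S true) (S false) := by
    rw [Finset.disjoint_left]
    intro a ha ha'
    exact hdiff a ha a ha' (by simp)
  have hcard := hPB {a : ℤ // a ∈ S true ∪ S false} (fun a => a.1) (τ ∪ Finset.Ico 0 R)
    ⟨0, Finset.mem_union_left _ h0⟩ (by
      rintro ⟨a, ha⟩ ⟨a', ha'⟩ hne
      have hne' : a ≠ a' := fun h => hne (Subtype.ext h)
      simp only
      rcases Finset.mem_union.1 ha with ha | ha <;> rcases Finset.mem_union.1 ha' with ha' | ha'
      · obtain ⟨s, hs, h⟩ := (hS true).2.2 a ha a' ha' hne'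
        exact ⟨s, Finset.mem_union_left _ hs, h⟩
      · exact hsep a ha a' ha'
      · obtain ⟨s, hs, h⟩ := hsep a' ha' a ha
        exact ⟨s, hs, h.symm⟩
      · obtain ⟨s, hs, h⟩ := (hS false).2.2 a ha a' ha' hne'
        exact ⟨s, Finset.mem_union_left _ hs, h⟩)
  rw [Fintype.card_coe, Finset.card_union_of_disjoint hdisj] at hcard
  have h1 := (hS true).1
  have h2 := (hS false).1
  have h3 := Finset.card_union_le τ (Finset.Ico 0 R)
  rw [Int.card_Ico, sub_zero] at h3
  omega


theorem per_iter {z : ℤ → Bool} {t i g : ℤ} (htg : t ∣ g)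
    (h : ∀ q : ℤ, t ∣ q - i → z (q + g) = z q) (q : ℤ) (hq : t ∣ q - i) (k : ℤ) :
    z (q + k * g) = z q := by
  have hcl : ∀ k : ℤ, t ∣ q + k * g - i := fun k => by
    have : q + k * g - i = (q - i) + k * g := by ring
    rw [this]
    exact dvd_add hq (htg.mul_left k)
  induction k using Int.induction_on with
  | zero => simp
  | succ k ih =>
    rw [← ih, ← h _ (hcl k)]
    congr 1
    ring
  | pred k ih =>
    rw [← ih, ← h _ (hcl (-k - 1))]
    congr 1
    ring

theorem common_period {z : ℤ → Bool} {T : ℤ} (hT : 0 < T) (S : ℤ → Prop)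
    (hS : ∀ q, S q → Per z T q) :
    ∃ P : ℤ, 0 < P ∧ T ∣ P ∧ ∀ q, S q → ∀ k : ℤ, z (q + k * P) = z q := by
  classical
  have main : ∀ F : Finset ℤ, ∃ P : ℤ, 0 < P ∧ T ∣ P ∧ ∀ q, S q → q % T ∈ F →
      ∀ k : ℤ, z (q + k * P) = z q := by
    intro F
    induction F using Finset.induction_on with
    | empty => exact ⟨T, hT, dvd_rfl, by simp⟩
    | insert r F _ ih =>
      obtain ⟨P, hP, hTP, h⟩ := ih
      by_cases hr : ∃ q0, S q0 ∧ q0 % T = r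
      · obtain ⟨q0, hq0, hq0r⟩ := hr
        obtain ⟨g, hg, hTg, hper⟩ := hS q0 hq0
        refine ⟨P * g, by positivity, hTP.mul_right _, fun q hq hqF k => ?_⟩
        rcases Finset.mem_insert.1 hqF with hqr | hqF
        · have hd : T ∣ q - q0 := Int.dvd_of_emod_eq_zero
            (Int.emod_eq_emod_iff_emod_sub_eq_zero.1 (hqr.trans hq0r.symm))
          rw [← mul_assoc]
          exact per_iter hTg hper q hd (k * P)
        · rw [show k * (P * g) = (k * g) * P by ring]
          exact h q hq hqF _
      · refine ⟨P, hP, hTP, fun q hq hqF k => ?_⟩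
        rcases Finset.mem_insert.1 hqF with hqr | hqF
        · exact absurd ⟨q, hq, hqr⟩ hr
        · exact h q hq hqF k
  obtain ⟨P, hP, hTP, h⟩ := main (Finset.Ico 0 T)
  exact ⟨P, hP, hTP, fun q hq k => h q hq
    (Finset.mem_Ico.2 ⟨Int.emod_nonneg _ hT.ne', Int.emod_lt_of_pos _ hT⟩) k⟩

theorem per_combine {z : ℤ → Bool} {t T h : ℤ} (hT : 0 < T) (htT : t ∣ T)
    (hS : ∀ i, t ∣ i - h → Per z T i) : Per z t h := by
  obtain ⟨P, hP, hTP, hp⟩ := common_period hT (fun i => t ∣ i - h) hS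
  exact ⟨P, hP, htT.trans hTP, fun q hq => by simpa using hp q hq 1⟩

/-- exactly one non-periodic class -/
def Level (z : ℤ → Bool) (t h : ℤ) : Prop :=
  0 < t ∧ ¬ Per z t h ∧ ∀ i, ¬ t ∣ i - h → Per z t i

theorem cst_per {z : ℤ → Bool} {t i : ℤ} (ht : 0 < t) (h : Cst z t i) : Per z t i :=
  ⟨t, ht, dvd_rfl, fun q hq => by
    rw [h q hq, h (q + t)]
    rw [show q + t - i = (q - i) + t by ring]
    exact dvd_add hq dvd_rfl⟩

theorem next_level {z : ℤ → Bool} (hUR : URd z) (hPB : PBd z) {t h : ℤ} (hl : Level z t h)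
    {u i : ℤ} (hu : 0 < u) (hi : t ∣ i - h) (hc : Cst z (t * u) i) :
    ∃ t' h' : ℤ, t ∣ t' ∧ t < t' ∧ t ∣ h' - h ∧ Level z t' h' ∧
      (∀ m, ¬ t ∣ m - h → z (m + t') = z m) ∧ ∃ c, Cst z t' c := by
  obtain ⟨ht, hnp, hper⟩ := hl
  obtain ⟨P, hP, htP, hp⟩ := common_period ht (fun i => ¬ t ∣ i - h) hper
  have hQ : 0 < P * (t * u) := by positivity
  set Q := P * (t * u) with hQd
  have htQ : t ∣ Q := htP.mul_right _
  have hcQ : Cst z Q i := fun q hq => hc q ((dvd_mul_left _ _).trans hq)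
  have hnh : ∀ m, ¬ t ∣ m - h → Cst z Q m := by
    intro m hm q hq
    obtain ⟨k, hk⟩ := hq
    rw [show q = m + (t * u * k) * P by rw [hQd] at hk; linear_combination hk]
    exact hp m hm _
  obtain ⟨i0, hi0, hi0n⟩ : ∃ i0, t ∣ i0 - h ∧ ¬ Cst z Q i0 := by
    by_contra hcon
    push Not at hcon
    exact hnp (per_combine hQ htQ fun i hi => cst_per hQ (hcon i hi))
  obtain ⟨t', ht', htQ', hζ, R, hR, hclock⟩ := exists_clock hUR Q hQ
  have htt : t ∣ t' := by
    have h1 : ¬ Cst z Q (i0 + 1 * t') :=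
      not_cst_of_ctype ((hζ i0 1).trans (ctype_none hi0n))
    have h2 : t ∣ i0 + 1 * t' - h := by
      by_contra hcon
      exact h1 (hnh _ hcon)
    have : t' = (i0 + 1 * t' - h) - (i0 - h) := by ring
    rw [this]
    exact dvd_sub h2 hi0
  have hcst : ∀ m, Cst z Q m → Cst z t' m := by
    intro m hm q hq
    obtain ⟨k, hk⟩ := hq
    have h1 := hζ m k
    rw [ctype_some hm] at h1
    rw [show q = m + k * t' by linear_combination hk]
    exact (cst_of_ctype h1).2
  have hlt : t < t' := by
    refine lt_of_le_of_ne (Int.le_of_dvd ht' htt) ?_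
    intro heq
    obtain ⟨k, hk⟩ : t' ∣ i0 - i := by
      rw [← heq, show i0 - i = (i0 - h) - (i - h) by ring]
      exact dvd_sub hi0 hi
    have h1 := hζ i k
    rw [ctype_some hcQ, show i + k * t' = i0 by linear_combination -hk] at h1
    exact hi0n (cst_of_ctype h1).1
  obtain ⟨h', hh', hnp'⟩ : ∃ h', t ∣ h' - h ∧ ¬ Per z t' h' := by
    by_contra hcon
    push Not at hcon
    exact hnp (per_combine ht' htt hcon)
  refine ⟨t', h', htt, hlt, hh', ⟨ht', hnp', fun i hi => ?_⟩, fun m hm => ?_, i, hcst i hcQ⟩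
  · by_contra hcon
    exact hi (one_hole hUR hPB ht' hR hclock hcon hnp')
  · exact hcst m (hnh m hm) _ (by simp)

theorem line_urd {z : ℤ → Bool} (hUR : URd z) {t : ℤ} (ht : 0 < t) (h : ℤ) :
    URd (fun j => z (h + t * j)) := by
  intro t0 ht0 R
  obtain ⟨G, hG, hr⟩ := hUR (t * t0) (by positivity) (|h| + t * R)
  refine ⟨G, hG, fun a => ?_⟩
  obtain ⟨g, h1, h2, ⟨w, hw⟩, h4⟩ := hr (t * a)
  have hg : g = t * (t0 * w) := by rw [hw]; ring
  refine ⟨t0 * w, ?_, ?_, dvd_mul_right _ _, fun i hi => ?_⟩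
  · rw [hg] at h1
    exact le_of_mul_le_mul_left h1 ht
  · have h3 : t * (t0 * w) ≤ t * (a + G) := by
      rw [← hg]
      nlinarith
    exact le_of_mul_le_mul_left h3 ht
  · have := h4 (h + t * i) ((abs_add_le _ _).trans (by
      rw [abs_mul, abs_of_pos ht]
      have := mul_le_mul_of_nonneg_left hi ht.le
      omega))
    simp only
    rw [← this, hg]
    congr 1
    ring

theorem line_pbd {z : ℤ → Bool} (hPB : PBd z) {t : ℤ} (ht : 0 < t) (h : ℤ) :
    PBd (fun j => z (h + t * j)) := by
  classical
  intro ι _ f τ hτ hd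
  have hcard := hPB ι (fun i => h + t * f i) (τ.image fun s => t * s) (hτ.image _) (by
    intro i j hij
    obtain ⟨s, hs, hne⟩ := hd i j hij
    refine ⟨t * s, Finset.mem_image_of_mem _ hs, ?_⟩
    simp only at hne ⊢
    rwa [show h + t * f i + t * s = h + t * (f i + s) by ring,
      show h + t * f j + t * s = h + t * (f j + s) by ring])
  exact hcard.trans (Nat.mul_le_mul_left _ Finset.card_image_le)

theorem line_const {z : ℤ → Bool} (hUR : URd z) (hPB : PBd z) {t : ℤ} (ht : 0 < t) (h : ℤ)
    {c : ℤ} (hc : Cst z t c) : ∃ u i : ℤ, 0 < u ∧ t ∣ i - h ∧ Cst z (t * u) i := by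
  classical
  by_contra hcon
  push Not at hcon
  have hNC : NoConst (fun j => z (h + t * j)) := by
    intro u hu i
    by_contra hno
    push Not at hno
    refine hcon u (h + t * i) hu (by simp) fun q hq => ?_
    obtain ⟨k, hk⟩ := hq
    rw [← hno k]
    congr 1
    linear_combination hk
  obtain ⟨α, lam, κ, zs, hα, hl0, hl1, hocc, hF, hT⟩ :=
    rot (line_urd hUR ht h) hNC (line_pbd hPB ht h)
  obtain ⟨K, hK, hbad⟩ := exists_bad_diff hα hl0 hl1
  obtain ⟨ε, hε0, hε1, hε2⟩ : ∃ ε0 : ℝ, 0 < ε0 ∧ ε0 ≤ lam ∧ ε0 ≤ 1 - lam :=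
    ⟨min lam (1 - lam), lt_min hl0 (by linarith), min_le_left _ _, min_le_right _ _⟩
  obtain ⟨N0, hN0, hd⟩ := pos_dense hα (2 * K) (by omega) ε hε0
  set τ := (Finset.Icc 0 (0 + N0)).image fun j => j * (2 * K) with hτ
  have hD : DenseT α τ ε := image_dense hd _ _ le_rfl
  have hgood : ∀ s ∈ τ, ∀ s' ∈ τ, ∀ k : ℤ, ((s : ℝ) - s') * α - lam ≠ k := by
    intro s hs s' hs' k hk
    obtain ⟨j, -, rfl⟩ := Finset.mem_image.1 hs
    obtain ⟨j', -, rfl⟩ := Finset.mem_image.1 hs'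
    rcases hbad _ _ k hk with h | h
    · exact two_mul_ne hK h
    · exact two_mul_ne hK h
  have hne : τ.Nonempty := by
    obtain ⟨s, hs, -⟩ := hD 0
    exact ⟨s, hs⟩
  have hpos : ∀ p : ℝ, ∃ q : ℤ, ∀ s ∈ τ, z (q + t * s) = code lam (p + s * α) := by
    intro p
    obtain ⟨m, hm⟩ := code_occ hα hl0 hl1 hF hT p τ
    obtain ⟨q, hq⟩ := hocc (∑ s ∈ τ, |m + s|)
    refine ⟨h + t * (q + m), fun s hs => ?_⟩
    rw [← hm s hs, ← hq (m + s) (Finset.single_le_sum (f := fun s => |m + s|)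
      (fun _ _ => abs_nonneg _) hs)]
    congr 1
    ring
  choose f hf using hpos
  have hboth : ∀ (p : ℝ) (b : Bool), ∃ s ∈ τ, z (f p + t * s) = b := by
    intro p b
    cases b with
    | false =>
      obtain ⟨s, hs, h1⟩ := hD p
      refine ⟨s, hs, ?_⟩
      rw [hf p s hs]
      exact code_false hl1 ⌊p + s * α⌋ (Int.fract_add_floor _).symm (Int.fract_nonneg _)
        (h1.trans_le hε1)
    | true =>
      obtain ⟨s, hs, h1⟩ := hD (p - lam)
      refine ⟨s, hs, ?_⟩
      rw [hf p s hs]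
      have h2 := Int.fract_nonneg (p - lam + s * α)
      have h3 := Int.floor_add_fract (p - lam + s * α)
      exact code_true hl0 ⌊p - lam + s * α⌋ (y := lam + Int.fract (p - lam + s * α))
        (by linarith) (by linarith) (by linarith)
  have hcz : ∀ s : ℤ, z (c + t * s) = z c := fun s => hc _ (by simp)
  let F : Option (τ × Bool) → ℤ := fun o => match o with
    | none => c
    | some (s, b) => f (crit α lam ((s : ℤ), b))
  have hcard := hPB (Option (τ × Bool)) F (τ.image fun s => t * s) (hne.image _) (by
    have hn : ∀ p : ℝ, ∃ s ∈ τ.image (fun s => t * s), z (c + s) ≠ z (f p + s) := by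
      intro p
      obtain ⟨s, hs, h1⟩ := hboth p (!z c)
      refine ⟨t * s, Finset.mem_image_of_mem _ hs, ?_⟩
      rw [h1, hcz]
      cases z c <;> decide
    intro o o' hoo
    match o, o' with
    | none, none => exact absurd rfl hoo
    | none, some (s, b) => exact hn _
    | some (s, b), none =>
      obtain ⟨s, hs, h1⟩ := hn (crit α lam ((s : ℤ), b))
      exact ⟨s, hs, h1.symm⟩
    | some (s, b), some (s', b') =>
      obtain ⟨x, hx, h1⟩ := crit_distinct hα hl0 hl1 hε1 hε2 hD hgood ((s : ℤ), b) ((s' : ℤ), b')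
        s.2 s'.2 (by
          intro h
          rw [Prod.mk.injEq] at h
          apply hoo
          rw [Subtype.ext h.1, h.2])
      refine ⟨t * x, Finset.mem_image_of_mem _ hx, ?_⟩
      simp only [F]
      rw [hf _ x hx, hf _ x hx]
      exact h1)
  have h2 := Finset.card_image_le (s := τ) (f := fun s => t * s)
  simp at hcard
  omega

/-- the tower of holes -/
structure Tower (z : ℤ → Bool) (t h : ℕ → ℤ) : Prop where
  pos : ∀ j, 0 < t j
  dvd : ∀ j, t j ∣ t (j + 1)
  lt : ∀ j, t j < t (j + 1)
  hh : ∀ j, t j ∣ h (j + 1) - h j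
  np : ∀ j, ¬ Per z (t j) (h j)
  per : ∀ j m, ¬ t j ∣ m - h j → z (m + t (j + 1)) = z m

theorem exists_tower {z : ℤ → Bool} (hUR : URd z) (hPB : PBd z)
    (hap : ∀ g : ℤ, 0 < g → ¬ ∀ q, z (q + g) = z q) (hNC : ¬ NoConst z) :
    ∃ t h : ℕ → ℤ, Tower z t h := by
  unfold NoConst at hNC
  push Not at hNC
  obtain ⟨u, hu, i, hi⟩ := hNC
  have hl0 : Level z 1 0 := ⟨one_pos, fun ⟨g, hg, _, hp⟩ => hap g hg fun q => hp q (one_dvd _),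
    fun i hi => absurd (one_dvd _) hi⟩
  obtain ⟨t1, h1, _, _, _, hl1, _, hc1⟩ := next_level hUR hPB hl0 (i := i) hu (one_dvd _) (by
    rintro q ⟨k, hk⟩
    rw [← hi k]
    congr 1
    linear_combination hk)
  have hstep : ∀ p : {p : ℤ × ℤ // Level z p.1 p.2 ∧ ∃ c, Cst z p.1 c},
      ∃ q : {p : ℤ × ℤ // Level z p.1 p.2 ∧ ∃ c, Cst z p.1 c},
        p.1.1 ∣ q.1.1 ∧ p.1.1 < q.1.1 ∧ p.1.1 ∣ q.1.2 - p.1.2 ∧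
        ∀ m, ¬ p.1.1 ∣ m - p.1.2 → z (m + q.1.1) = z m := by
    rintro ⟨⟨t, h⟩, hl, c, hc⟩
    obtain ⟨u, i, hu, hi, hci⟩ := line_const hUR hPB hl.1 h hc
    obtain ⟨t', h', a1, a2, a3, a4, a5, a6⟩ := next_level hUR hPB hl hu hi hci
    exact ⟨⟨(t', h'), a4, a6⟩, a1, a2, a3, a5⟩
  choose F hF1 hF2 hF3 hF4 using hstep
  let sq : ℕ → {p : ℤ × ℤ // Level z p.1 p.2 ∧ ∃ c, Cst z p.1 c} :=
    fun n => Nat.rec ⟨(t1, h1), hl1, hc1⟩ (fun _ p => F p) n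
  exact ⟨fun n => (sq n).1.1, fun n => (sq n).1.2, ⟨fun j => (sq j).2.1.1, fun j => hF1 (sq j),
    fun j => hF2 (sq j), fun j => hF3 (sq j), fun j => (sq j).2.1.2.1, fun j => hF4 (sq j)⟩⟩


namespace Tower

variable {z : ℤ → Bool} {t h : ℕ → ℤ}

theorem dvd_le (H : Tower z t h) {j k : ℕ} (hjk : j ≤ k) : t j ∣ t k := by
  induction k, hjk using Nat.le_induction with
  | base => exact dvd_rfl
  | succ k _ ih => exact ih.trans (H.dvd k)

theorem hh_le (H : Tower z t h) {j k : ℕ} (hjk : j ≤ k) : t j ∣ h k - h j := by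
  induction k, hjk using Nat.le_induction with
  | base => simp
  | succ k hk ih =>
    rw [show h (k + 1) - h j = (h (k + 1) - h k) + (h k - h j) by ring]
    exact dvd_add ((H.dvd_le hk).trans (H.hh k)) ih

theorem ge (H : Tower z t h) (j : ℕ) : (j : ℤ) < t j := by
  induction j with
  | zero => exact_mod_cast H.pos 0
  | succ j ih =>
    have := H.lt j
    push_cast
    omega

/-- periodicity off the hole -/
theorem perd (H : Tower z t h) {j : ℕ} {m d : ℤ} (hm : ¬ t j ∣ m - h j) (hd : t (j + 1) ∣ d) :
    z (m + d) = z m := by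
  obtain ⟨k, rfl⟩ := hd
  rw [mul_comm]
  have hcl : ∀ q : ℤ, t (j + 1) ∣ q - m → ¬ t j ∣ q - h j := by
    intro q hq hq'
    apply hm
    rw [show m - h j = (q - h j) - (q - m) by ring]
    exact dvd_sub hq' ((H.dvd j).trans hq)
  exact per_iter (i := m) dvd_rfl (fun q hq => H.per j q (hcl q hq)) m (by simp) k

theorem both (H : Tower z t h) (hUR : URd z) (j : ℕ) : ∃ k0 : ℕ, ∀ k, k0 ≤ k → ∀ b : Bool,
    ∃ m : ℤ, t j ∣ m - h j ∧ ¬ t k ∣ m - h k ∧ z m = b := by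
  obtain ⟨K, hK, hocc⟩ := occ_uniform hUR (t j) (H.pos j)
  refine ⟨(K * t j).toNat, fun k hk b => ?_⟩
  have hbig : K * t j < t k := by
    have := H.ge k
    omega
  obtain ⟨q, hq, hqb, -⟩ := updown hUR (H.np j) (t j) (H.pos j) dvd_rfl b
  by_cases hc : t k ∣ q - h k
  · obtain ⟨w, hw0, hw1, hw⟩ := hocc (q + t j) q (by simp)
    refine ⟨q + t j + w * t j, ?_, ?_, hw.trans hqb⟩
    · rw [show q + t j + w * t j - h j = (q - h j) + (w + 1) * t j by ring]
      exact dvd_add hq (dvd_mul_left _ _)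
    · intro hc'
      have h1 : t k ∣ (w + 1) * t j := by
        rw [show (w + 1) * t j = (q + t j + w * t j - h k) - (q - h k) by ring]
        exact dvd_sub hc' hc
      have h2 := Int.le_of_dvd (mul_pos (by omega) (H.pos j)) h1
      have h3 : (w + 1) * t j ≤ K * t j := mul_le_mul_of_nonneg_right (by omega) (H.pos j).le
      omega
  · exact ⟨q, hq, hc, hqb⟩

end Tower

/-- occurrence of a three-letter pattern -/
def Occ3 (X : ℤ → Bool) (s d : ℤ) (a b c : Bool) : Prop :=
  ∃ m : ℤ, 0 ≤ m ∧ 0 ≤ m + s ∧ 0 ≤ m + d ∧ X m = a ∧ X (m + s) = b ∧ X (m + d) = c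

theorem occ3_of_late {X z : ℤ → Bool} (hL : LateOcc X z) {s d m : ℤ} {a b c : Bool}
    (h1 : z m = a) (h2 : z (m + s) = b) (h3 : z (m + d) = c) : Occ3 X s d a b c := by
  obtain ⟨m', hm'⟩ := late_finset hL {0, s, d} m
  have e1 := hm' 0 (by simp)
  have e2 := hm' s (by simp)
  have e3 := hm' d (by simp)
  rw [add_zero, add_zero] at e1
  exact ⟨m', e1.1, e2.1, e3.1, e1.2.trans h1, e2.2.trans h2, e3.2.trans h3⟩

theorem seven {X : ℤ → Bool} (hX : XBd X) {s d : ℤ} (hs : s ≠ 0) (hd : d ≠ 0) (hsd : s ≠ d)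
    (b e : Bool) (h1 : ∀ c, Occ3 X s d c (!c) (!b)) (h2 : ∀ c, Occ3 X s d c c (!b))
    (h3 : ∀ c, Occ3 X s d c c b) (h4 : Occ3 X s d e (!e) b) : False := by
  classical
  have hall : ∀ v : Bool × Bool × Bool, v ≠ (!e, e, b) → Occ3 X s d v.1 v.2.1 v.2.2 := by
    rintro ⟨v1, v2, v3⟩ hv
    have k1 := h1 v1
    have k2 := h2 v1
    have k3 := h3 v1
    revert hv k1 k2 k3 h4
    clear h1 h2 h3
    cases v1 <;> cases v2 <;> cases v3 <;> cases b <;> cases e <;> simp <;> tauto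
  have hcard := hX {v : Bool × Bool × Bool // v ≠ (!e, e, b)}
    (fun v x => if x = 0 then v.1.1 else if x = s then v.1.2.1 else v.1.2.2) {0, s, d} (by simp)
    (by
      rintro ⟨v, hv⟩
      obtain ⟨m, m1, m2, m3, e1, e2, e3⟩ := hall v hv
      refine ⟨m, fun x hx => ?_⟩
      simp only [Finset.mem_insert, Finset.mem_singleton] at hx
      rcases hx with rfl | rfl | rfl
      · simp [m1, e1]
      · simp [m2, e2, hs]
      · simp [m3, e3, hd, hsd.symm])
    (by
      rintro ⟨v, hv⟩ ⟨w, hw⟩ hne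
      by_contra hcon
      push Not at hcon
      have e1 := hcon 0 (by simp)
      have e2 := hcon s (by simp)
      have e3 := hcon d (by simp)
      simp only [if_true] at e1
      simp only [hs, if_true, if_false] at e2
      simp only [hd, hsd.symm, if_false] at e3
      exact hne (Subtype.ext (Prod.ext e1 (Prod.ext e2 e3))))
  have h7 : Fintype.card {v : Bool × Bool × Bool // v ≠ (!e, e, b)} = 7 := by
    cases e <;> cases b <;> decide
  rw [h7] at hcard
  have := Finset.card_le_three (a := (0 : ℤ)) (b := s) (c := d)
  omega

/-- never settling position -/
def Active (X : ℤ → Bool) (t : ℕ → ℤ) (m : ℤ) : Prop :=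
  ∀ k, ∃ s : ℤ, 0 < s ∧ t k ∣ s ∧ X m ≠ X (m + s)

theorem claimA {X z : ℤ → Bool} {t h : ℕ → ℤ} (hX : XBd X) (hL : LateOcc X z) (hUR : URd z)
    (H : Tower z t h) (j : ℕ) : ∃ W : ℤ, 0 < W ∧ ∀ m1 R0 a : ℤ, 0 ≤ m1 → 0 ≤ R0 →
      Active X t m1 → (∀ i, 0 ≤ i → i < W → X (R0 + i) = z (a + i)) →
      t j ∣ m1 - R0 + a - h j := by
  obtain ⟨k0, hk0⟩ := H.both hUR (j + 1)
  obtain ⟨k, hk1, hk2⟩ : ∃ k, k0 ≤ k ∧ j + 1 ≤ k := ⟨max k0 (j + 1), le_max_left _ _, le_max_right _ _⟩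
  refine ⟨t (k + 1), H.pos _, fun m1 R0 a hm1 hR0 hact hwin => ?_⟩
  by_contra hD
  obtain ⟨D, hDd⟩ : ∃ D, D = m1 - R0 + a := ⟨_, rfl⟩
  rw [← hDd] at hD
  obtain ⟨b, hb⟩ : ∃ b, b = z D := ⟨_, rfl⟩
  obtain ⟨ms, hms1, hms2, hms3⟩ := hk0 k hk1 (!b)
  have hPpos := H.pos (k + 1)
  have hkk : t k ∣ t (k + 1) := H.dvd k
  -- the shift d
  obtain ⟨d, hd1, hd2, hd3⟩ : ∃ d : ℤ, t (k + 1) ∣ h (k + 1) + d - ms ∧ R0 ≤ m1 + d ∧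
      m1 + d < R0 + t (k + 1) := by
    refine ⟨R0 - m1 + (ms - h (k + 1) - (R0 - m1)) % t (k + 1), ?_, ?_, ?_⟩
    · have : h (k + 1) + (R0 - m1 + (ms - h (k + 1) - (R0 - m1)) % t (k + 1)) - ms =
          -((ms - h (k + 1) - (R0 - m1)) - (ms - h (k + 1) - (R0 - m1)) % t (k + 1)) := by ring
      rw [this, dvd_neg]
      exact Int.dvd_self_sub_emod
    · have := Int.emod_nonneg (ms - h (k + 1) - (R0 - m1)) hPpos.ne'
      omega
    · have := Int.emod_lt_of_pos (ms - h (k + 1) - (R0 - m1)) hPpos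
      omega
  have hdk : ¬ t k ∣ d := by
    intro hc
    apply hms2
    rw [show ms - h k = (h (k + 1) - h k) + d - (h (k + 1) + d - ms) by ring]
    exact dvd_sub (dvd_add (H.hh k) hc) (hkk.trans hd1)
  have hdj : t (j + 1) ∣ d := by
    rw [show d = (h (k + 1) + d - ms) + (ms - h (j + 1)) - (h (k + 1) - h (j + 1)) by ring]
    exact dvd_sub (dvd_add ((H.dvd_le (by omega)).trans hd1) hms1) (H.hh_le (by omega))
  have hXd : X (m1 + d) = b := by
    have := hwin (m1 + d - R0) (by omega) (by omega)
    rw [show R0 + (m1 + d - R0) = m1 + d by ring,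
      show a + (m1 + d - R0) = D + d by rw [hDd]; ring, H.perd hD hdj] at this
    rw [this, hb]
  -- choose l
  obtain ⟨l0, hl0⟩ := H.both hUR (k + 1)
  obtain ⟨l, hl1, hl2, hl3⟩ : ∃ l, l0 ≤ l ∧ k + 1 ≤ l ∧ t (k + 1) * |d| < t l := by
    refine ⟨max l0 (max (k + 1) (t (k + 1) * |d|).toNat), le_max_left _ _,
      (le_max_left _ _).trans (le_max_right _ _), ?_⟩
    have := H.ge (max l0 (max (k + 1) (t (k + 1) * |d|).toNat))
    have h1 : (t (k + 1) * |d|).toNat ≤ max l0 (max (k + 1) (t (k + 1) * |d|).toNat) :=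
      (le_max_right _ _).trans (le_max_right _ _)
    omega
  obtain ⟨s, hs0, hs1, hs2⟩ := hact (l + 1)
  have hsl : t l ∣ s := (H.dvd l).trans hs1
  have hsk1 : t (k + 1) ∣ s := (H.dvd_le (by omega)).trans hs1
  have hsk : t k ∣ s := hkk.trans hsk1
  have hsj : t (j + 1) ∣ s := (H.dvd_le (by omega)).trans hs1
  have hhl : t (k + 1) ∣ h l - h (k + 1) := H.hh_le hl2
  have hhlk : t k ∣ h l - h k := H.hh_le (by omega)
  have hd0 : d ≠ 0 := by
    rintro rfl
    exact hdk (dvd_zero _)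
  have hsd : s ≠ d := by
    rintro rfl
    exact hdk hsk
  -- points above the hole
  have hup : ∀ m, t (k + 1) ∣ m - h (k + 1) → z (m + d) = !b := by
    intro m hm
    rw [← hms3, show m + d = ms + ((m - h (k + 1)) + (h (k + 1) + d - ms)) by ring]
    exact H.perd hms2 (dvd_add hm hd1)
  have hdown : ∀ m, t (k + 1) ∣ m - (h l - d) → ¬ t k ∣ m - h k := by
    intro m hm hc
    apply hdk
    rw [show d = (h l - h k) - (m - h k) + (m - (h l - d)) by ring]
    exact dvd_add (dvd_sub hhlk hc) (hkk.trans hm)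
  have hdownz : ∀ m, t (k + 1) ∣ m - (h l - d) → z m = z (h l - d) := by
    intro m hm
    rw [← H.perd (hdown (h l - d) (by simp)) hm]
    congr 1
    ring
  have p5 : Occ3 X s d (z (h l - d)) (z (h l - d)) b := by
    obtain ⟨n, hn1, hn2, hn3⟩ := hl0 l hl1 b
    have hm : t (k + 1) ∣ (n - d) - (h l - d) := by
      rw [show (n - d) - (h l - d) = (n - h (k + 1)) - (h l - h (k + 1)) by ring]
      exact dvd_sub hn1 hhl
    refine occ3_of_late hL (m := n - d) (hdownz _ hm) ?_ (by rw [sub_add_cancel]; exact hn3)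
    rw [H.perd (hdown _ hm) hsk1]
    exact hdownz _ hm
  have p6 : Occ3 X s d (!z (h l - d)) (!z (h l - d)) b := by
    by_cases hbb : z (h l - d) = b
    · rw [hbb]
      have hP2 : 2 ≤ t (k + 1) := by
        have := H.lt k
        have := H.pos k
        omega
      obtain ⟨n0, hn0⟩ : ∃ n0 : ℕ, (n0 : ℤ) = t (k + 1) - 2 :=
        ⟨(t (k + 1) - 2).toNat, Int.toNat_of_nonneg (by omega)⟩
      have hlast : z (h l + d + n0 * d) = b := by
        rw [← hbb, hn0]
        apply hdownz
        rw [show h l + d + (t (k + 1) - 2) * d - (h l - d) = t (k + 1) * d by ring]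
        exact dvd_mul_right _ _
      classical
      have hex : ∃ w : ℕ, z (h l + d + w * d) = b := ⟨n0, hlast⟩
      have hspec := Nat.find_spec hex
      have hle := Nat.find_min' hex hlast
      have hmin := fun w (hw : w < Nat.find hex) => Nat.find_min hex hw
      set n := Nat.find hex
      have hn : n ≠ 0 := by
        intro hn
        have h1 := hup (h l) hhl
        rw [hn] at hspec
        simp only [Nat.cast_zero, zero_mul, add_zero] at hspec
        rw [hspec] at h1
        cases b <;> cases h1
      have hm := hmin (n - 1) (by omega)
      have hm' : z (h l + d + (n - 1 : ℕ) * d) = !b := by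
        revert hm
        cases z (h l + d + (n - 1 : ℕ) * d) <;> cases b <;> simp
      have hnc : ((n - 1 : ℕ) : ℤ) = n - 1 := by
        push_cast [show 1 ≤ n by omega]
        ring
      refine occ3_of_late hL hm' ?_ ?_
      · rw [H.perd (j := l) ?_ hs1, hm']
        rw [hnc, show h l + d + ((n : ℤ) - 1) * d - h l = n * d by ring]
        intro hc
        have hpos : 0 < |(n : ℤ) * d| := abs_pos.2 (mul_ne_zero (by omega) hd0)
        have h1 := Int.le_of_dvd hpos ((dvd_abs _ _).2 hc)
        rw [abs_mul, Nat.abs_cast] at h1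
        have h2 : (n : ℤ) * |d| ≤ t (k + 1) * |d| :=
          mul_le_mul_of_nonneg_right (by omega) (abs_nonneg d)
        omega
      · rw [← hspec, hnc]
        congr 1
        ring
    · have hbb' : z (h l - d) = !b := by
        revert hbb
        cases z (h l - d) <;> cases b <;> simp
      rw [hbb', Bool.not_not]
      exact occ3_of_late hL (m := D) hb.symm ((H.perd hD hsj).trans hb.symm)
        ((H.perd hD hdj).trans hb.symm)
  refine seven hX hs0.ne' hd0 hsd b (X m1) ?_ ?_ ?_ ?_
  · intro c
    obtain ⟨q, hq1, hq2, hq3⟩ := updown hUR (H.np l) s hs0 hsl c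
    refine occ3_of_late hL hq2 hq3 (hup q ?_)
    rw [show q - h (k + 1) = (q - h l) + (h l - h (k + 1)) by ring]
    exact dvd_add ((H.dvd_le hl2).trans hq1) hhl
  · intro c
    obtain ⟨m, hm1, hm2, hm3⟩ := hl0 l hl1 c
    exact occ3_of_late hL hm3 ((H.perd hm2 hs1).trans hm3) (hup m hm1)
  · intro c
    by_cases hc : c = z (h l - d)
    · rw [hc]
      exact p5
    · have : c = !z (h l - d) := by
        revert hc
        cases z (h l - d) <;> cases c <;> simp
      rw [this]
      exact p6
  · refine ⟨m1, hm1, by omega, by omega, rfl, ?_, hXd⟩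
    revert hs2
    cases X m1 <;> cases X (m1 + s) <;> simp

theorem case_two {X z : ℤ → Bool} (hX : XBd X) (hL : LateOcc X z) (hUR : URd z)
    (hap : ∀ g : ℤ, 0 < g → ¬ ∀ q, z (q + g) = z q) (hNC : ¬ NoConst z) (hNR : NRec X) :
    False := by
  classical
  obtain ⟨t, h, H⟩ := exists_tower hUR (pbd_of_xbd hX hL) hap hNC
  obtain ⟨L, hLN⟩ := hNR
  have huniq : ∀ m m', 0 ≤ m → m < L → 0 ≤ m' → m' < L → Active X t m → Active X t m' →
      m = m' := by
    intro m m' a1 a2 a3 a4 a5 a6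
    obtain ⟨W, hW, hA⟩ := claimA hX hL hUR H L.toNat
    obtain ⟨r, hr, hr'⟩ := hL W 0
    have hwin : ∀ i, 0 ≤ i → i < W → X (r + i) = z (0 + i) := fun i h0 h1 => by
      rw [zero_add]
      exact hr' i (by rw [abs_of_nonneg h0]; omega)
    have e1 := hA m r 0 a1 (by omega) a5 hwin
    have e2 := hA m' r 0 a3 (by omega) a6 hwin
    have e3 := dvd_sub e1 e2
    have hge := H.ge L.toNat
    by_contra hne
    rw [show m - r + 0 - h L.toNat - (m' - r + 0 - h L.toNat) = m - m' by ring] at e3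
    have h4 := Int.le_of_dvd (abs_pos.2 (sub_ne_zero.2 hne)) ((dvd_abs _ _).2 e3)
    have h5 : |m - m'| < L := abs_lt.2 ⟨by omega, by omega⟩
    omega
  have hsettle : ∀ i, ∃ k, ¬ Active X t i → ∀ s : ℤ, 0 < s → t k ∣ s → X i = X (i + s) := by
    intro i
    by_cases hi : Active X t i
    · exact ⟨0, fun h => absurd hi h⟩
    · unfold Active at hi
      push Not at hi
      obtain ⟨k, hk⟩ := hi
      exact ⟨k, fun _ => hk⟩
  choose kf hkf using hsettle
  obtain ⟨K, hK⟩ : ∃ K, ∀ i ∈ Finset.Ico 0 L, kf i ≤ K :=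
    ⟨(Finset.Ico 0 L).sup kf, fun i hi => Finset.le_sup hi⟩
  obtain ⟨s, hs0, hs1, hs2⟩ : ∃ s : ℤ, 0 < s ∧ t K ∣ s ∧
      ∀ p, 0 ≤ p → p < L → Active X t p → X (p + s) = X p := by
    by_cases hact : ∃ p, 0 ≤ p ∧ p < L ∧ Active X t p
    · obtain ⟨p0, hp0, hpL, hpA⟩ := hact
      suffices hsuf : ∃ s : ℤ, 0 < s ∧ t K ∣ s ∧ X (p0 + s) = X p0 by
        obtain ⟨s, b1, b2, b3⟩ := hsuf
        refine ⟨s, b1, b2, fun p c1 c2 c3 => ?_⟩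
        rw [huniq p p0 c1 c2 hp0 hpL c3 hpA, b3]
      obtain ⟨W, hW, hA⟩ := claimA hX hL hUR H K
      have htK := H.pos K
      obtain ⟨Kc, hKc, hocc⟩ := occ_uniform hUR (t K) htK
      obtain ⟨q, hq1, hq2, -⟩ := updown hUR (H.np K) (t K) htK dvd_rfl (X p0)
      have hprod : 0 ≤ t K * (Kc + 1) := by positivity
      obtain ⟨r, hr, hr'⟩ := hL (W + t K * (Kc + 1)) (p0 + 1)
      have hD := hA p0 r 0 hp0 (by omega) hpA fun i h0 h1 => by
        rw [zero_add]
        exact hr' i (by rw [abs_of_nonneg h0]; omega)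
      have hmod := Int.dvd_self_sub_emod (x := p0 - r) (m := t K)
      have hm0 := Int.emod_nonneg (p0 - r) htK.ne'
      have hm1 := Int.emod_lt_of_pos (p0 - r) htK
      set p := (p0 - r) % t K
      obtain ⟨k, hk0, hk1, hk⟩ := hocc p q (by
        rw [show p - q = (p0 - r + 0 - h K) - (p0 - r - p) - (q - h K) by ring]
        exact dvd_sub (dvd_sub hD hmod) hq1)
      have hkt : k * t K ≤ Kc * t K := mul_le_mul_of_nonneg_right hk1.le htK.le
      have hkt0 : 0 ≤ k * t K := by positivity
      refine ⟨p + k * t K - (p0 - r), by omega, ?_, ?_⟩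
      · rw [show p + k * t K - (p0 - r) = k * t K - (p0 - r - p) by ring]
        exact dvd_sub (dvd_mul_left _ _) hmod
      · rw [show p0 + (p + k * t K - (p0 - r)) = r + (p + k * t K) by ring,
          hr' _ (by rw [abs_of_nonneg (by omega)]; linarith), hk, hq2]
    · push Not at hact
      exact ⟨t K, H.pos K, dvd_rfl, fun p c1 c2 c3 => absurd c3 (hact p c1 c2)⟩
  obtain ⟨i, hi0, hiL, hi⟩ := hLN s (by omega)
  apply hi
  rw [add_comm]
  by_cases ha : Active X t i
  · exact hs2 i hi0 hiL ha
  · exact (hkf i ha s hs0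
      ((H.dvd_le (hK i (Finset.mem_Ico.2 ⟨hi0, hiL⟩))).trans hs1)).symm

/-! ### Assembly -/

theorem t1_eq_of (r r' : ℝ) (k : ℤ) (h : r = r' + k) : (r : T1) = (r' : T1) := by
  rw [h, AddCircle.coe_add, add_eq_left, AddCircle.coe_eq_zero_iff]
  exact ⟨k, by simp⟩

theorem t1_mem_iff (r : ℝ) (S : Set ℝ) :
    (r : T1) ∈ (fun r : ℝ => (r : T1)) '' S ↔ ∃ k : ℤ, r + k ∈ S := by
  constructor
  · rintro ⟨y, hy, h⟩
    have h' : ((y - r : ℝ) : T1) = 0 := by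
      rw [AddCircle.coe_sub, sub_eq_zero]
      exact h
    obtain ⟨k, hk⟩ := (AddCircle.coe_eq_zero_iff (1 : ℝ)).1 h'
    refine ⟨k, ?_⟩
    have : r + k = y := by
      simp at hk
      linarith
    rwa [this]
  · rintro ⟨k, hk⟩
    exact ⟨r + k, hk, t1_eq_of _ _ k rfl⟩

theorem nrec_of_not_recurrent (x : Seq2) (h : ¬ Recurrent x) :
    NRec (fun m : ℤ => decide (x m.toNat = 1)) := by
  unfold Recurrent at h
  push Not at h
  obtain ⟨L, hL⟩ := h
  refine ⟨L, fun M hM => ?_⟩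
  obtain ⟨i, hi, hne⟩ := hL M.toNat (by omega)
  refine ⟨i, by omega, by omega, ?_⟩
  simp only [ne_eq, decide_eq_decide, Int.toNat_natCast]
  rw [show (M + i).toNat = M.toNat + i by omega]
  intro hiff
  apply hne
  generalize x i = u at hiff
  generalize x (M.toNat + i) = v at hiff
  revert hiff
  revert u v
  decide

/-- a nonrecurrent pattern Sturmian sequence whose orbit closure contains
an infinite minimal subshift is the coding sequence of an open or closed arc whose
endpoints are `k₁α` and `k₂α` (Proposition 5.4 of the paper). -/
theorem stmt15 (x : Seq2) (hnrec : ¬ Recurrent x) (hps : PatternSturmian x)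
    (hmin : ∃ Y : Set Seq2, Y ⊆ orbitClosure x ∧ MinimalSubshift Y ∧ Y.Infinite) :
    ∃ (α : ℝ), Irrational α ∧ ∃ (k₁ k₂ : ℕ), k₁ ≠ k₂ ∧ ∃ (I : Set T1) (a b : ℝ),
      (a : T1) = (((k₁ : ℝ) * α : ℝ) : T1) ∧ (b : T1) = (((k₂ : ℝ) * α : ℝ) : T1) ∧
      a < b ∧ b - a ≤ 1 ∧
      (I = (fun r : ℝ => (r : T1)) '' Set.Ioo a b ∨
       I = (fun r : ℝ => (r : T1)) '' Set.Icc a b) ∧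
      ∀ n : ℕ, x n = 1 ↔ (((n : ℝ) * α : ℝ) : T1) ∈ I := by
  obtain ⟨Y, hYx, hY, hinf⟩ := hmin
  obtain ⟨z, hz, hUR⟩ := exists_unif_rec_twosided Y hY
  have hX := xbd_of_sturmian x hps
  have hL := late_of_mem x Y hYx z hz
  have hNR := nrec_of_not_recurrent x hnrec
  by_cases hNC : NoConst (fun m => decide (z m = 1))
  · obtain ⟨α, hα, k₁, k₂, hk, a, b, ⟨j₁, ha⟩, ⟨j₂, hb⟩, hab, hab1, h⟩ :=
      case_one hX hL hUR hNC hNR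
    simp only [decide_eq_true_eq, Int.toNat_natCast] at h
    rcases h with h | h
    · exact ⟨α, hα, k₁, k₂, hk, (fun r : ℝ => (r : T1)) '' Set.Ioo a b, a, b,
        t1_eq_of _ _ j₁ ha, t1_eq_of _ _ j₂ hb, hab, hab1, Or.inl rfl, fun n => by
          rw [t1_mem_iff, h n]⟩
    · exact ⟨α, hα, k₁, k₂, hk, (fun r : ℝ => (r : T1)) '' Set.Icc a b, a, b,
        t1_eq_of _ _ j₁ ha, t1_eq_of _ _ j₂ hb, hab, hab1, Or.inr rfl, fun n => by
          rw [t1_mem_iff, h n]⟩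
  · refine (case_two hX hL hUR (fun g hg hper => ?_) hNC hNR).elim
    refine aper_of_mem Y hY hinf z hz g hg fun q => ?_
    have h1 := hper q
    simp only [decide_eq_decide] at h1
    generalize z (q + g) = u at h1 ⊢
    generalize z q = v at h1 ⊢
    revert h1
    revert u v
    decide
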